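/- arXiv:1403.6581 — 5 statements merged into one kernel-verified Lean document; each statement's English description precedes it below -/
import Mathlib

section
/- Assume d + α ≠ 3. There exists a constant c > 0, depending only on d and α, such that for all λ with 0 < λ < α < λ+1 and all t ∈ [-1,1): u_λ(t) - u_0(t) ≥ 1/(α-λ) - c. Moreover, for every δ ∈ (0,1) there exists a constant C > 0, depending only on d, α and δ, such that for all such λ and t: u_λ(t) - u_0(t) ≤ 1/(α-λ) + C/(α-λ)^{1-δ} + C·max(1, (1-t)^{-(d+α-3)/2})/(α-λ)^δ. -/
open MeasureTheory Metric Real Set Filter RealInnerProductSpace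
open scoped ENNReal

noncomputable section

/-- Euclidean space ℝ^d. -/
abbrev Ed (d : ℕ) := EuclideanSpace ℝ (Fin d)

/-- The constant `A_{d,α}`. -/
noncomputable def fracConst (d : ℕ) (α : ℝ) : ℝ :=
  α * 2 ^ (α - 1) * π ^ (-(d : ℝ) / 2) * Real.Gamma (((d : ℝ) + α) / 2) / Real.Gamma (1 - α / 2)

/-- The fractional Laplacian `Δ^{α/2} Φ (x)` exists and equals `L`. -/
def fracLapAt (d : ℕ) (α : ℝ) (Φ : Ed d → ℝ) (x : Ed d) (L : ℝ) : Prop :=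
  Filter.Tendsto
    (fun ε : ℝ => fracConst d α *
      ∫ y in {y : Ed d | ε < ‖y - x‖}, (Φ y - Φ x) * ‖y - x‖ ^ (-(d : ℝ) - α))
    (nhdsWithin 0 (Set.Ioi 0)) (nhds L)

/-- The last coordinate of a vector in ℝ^d. -/
def lastCoord (d : ℕ) (x : Ed d) : ℝ :=
  if h : 0 < d then x ⟨d - 1, Nat.sub_lt h Nat.one_pos⟩ else 0

/-- The unit vector `e_d = (0,…,0,1)`. -/
def eLast (d : ℕ) : Ed d :=
  if h : 0 < d then EuclideanSpace.single ⟨d - 1, Nat.sub_lt h Nat.one_pos⟩ (1 : ℝ) else 0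

/-- The right circular cone `Γ_Θ` of angle `Θ`. -/
def cone (d : ℕ) (Θ : ℝ) : Set (Ed d) := {x | ‖x‖ * Real.cos Θ < lastCoord d x}

/-- The unit sphere `S^{d-1}` in ℝ^d. -/
def unitSphere (d : ℕ) : Set (Ed d) := Metric.sphere (0 : Ed d) 1

/-- The spherical cap `B_Θ`. -/
def capB (d : ℕ) (Θ : ℝ) : Set (Ed d) := {θ | θ ∈ unitSphere d ∧ Real.cos Θ < lastCoord d θ}

/-- The surface measure `σ`: the (d-1)-dimensional Hausdorff measure. -/
noncomputable def sphMeasure (d : ℕ) : Measure (Ed d) := μH[(d : ℝ) - 1]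

/-- The kernel `u_λ(t)`. -/
noncomputable def uKernel (d : ℕ) (α lam t : ℝ) : ℝ :=
  ∫ r in Set.Ioi (0 : ℝ), r ^ ((d : ℝ) + lam - 1) * (r ^ 2 - 2 * r * t + 1) ^ (-((d : ℝ) + α) / 2)

/-- The kernel `u_λ(t)` as a value in `[0,∞]`. -/
noncomputable def uKernelE (d : ℕ) (α lam t : ℝ) : ℝ≥0∞ :=
  ∫⁻ r in Set.Ioi (0 : ℝ),
    ENNReal.ofReal (r ^ ((d : ℝ) + lam - 1) * (r ^ 2 - 2 * r * t + 1) ^ (-((d : ℝ) + α) / 2))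

/-- The spherical fractional Laplacian `Δ_S^{α/2} φ (η)` exists and equals `L`. -/
def sphFracLapAt (d : ℕ) (α : ℝ) (φ : Ed d → ℝ) (η : Ed d) (L : ℝ) : Prop :=
  Filter.Tendsto
    (fun ε : ℝ => fracConst d α *
      ∫ θ in {θ : Ed d | θ ∈ unitSphere d ∧ ⟪θ, η⟫ ≤ Real.cos ε},
        (φ θ - φ η) * uKernel d α 0 ⟪θ, η⟫ ∂(sphMeasure d))
    (nhdsWithin 0 (Set.Ioi 0)) (nhds L)

/-- The integrand of the radial operator `R_λ`. -/
noncomputable def RopIntegrand (d : ℕ) (α lam : ℝ) (φ : Ed d → ℝ) (η θ : Ed d) : ℝ :=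
  φ θ * (uKernel d α lam ⟪θ, η⟫ - uKernel d α 0 ⟪θ, η⟫)

/-- The radial operator `R_λ φ (η)`. -/
noncomputable def Rop (d : ℕ) (α lam : ℝ) (φ : Ed d → ℝ) (η : Ed d) : ℝ :=
  fracConst d α * ∫ θ in unitSphere d, RopIntegrand d α lam φ η θ ∂(sphMeasure d)

/-- The modulus `ω`. -/
noncomputable def omegaFn (α Θ : ℝ) : ℝ :=
  if α < 1 then Θ ^ α else if α = 1 then Θ * |Real.log Θ| else Θ

/-- The Euler beta function. -/
noncomputable def eulerBeta (a b : ℝ) : ℝ := Real.Gamma a * Real.Gamma b / Real.Gamma (a + b)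

/-- The constant `B_{d,α}`. -/
noncomputable def Bconst (d : ℕ) (α : ℝ) : ℝ :=
  Real.Gamma (((d : ℝ) + α) / 2) / (π ^ ((3 : ℝ) / 2) * Real.Gamma (((d : ℝ) - 1 + α) / 2)) *
    Real.sin (π * α / 2) * eulerBeta (1 + α / 2) (((d : ℝ) - 1) / 2)

/-- The constant `C_{d-1,α}`. -/
noncomputable def Cexit (d : ℕ) (α : ℝ) : ℝ :=
  Real.Gamma (((d : ℝ) - 1) / 2) /
    (2 ^ α * Real.Gamma (((d : ℝ) - 1 + α) / 2) * Real.Gamma (1 + α / 2))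

/-- The constant `C̃_{d,α}`. -/
noncomputable def Ctilde (d : ℕ) (α : ℝ) : ℝ :=
  π ^ (((d : ℝ) - 1) / 2) / Real.Gamma (((d : ℝ) - 1) / 2) * Cexit d α *
    eulerBeta (1 + α / 2) (((d : ℝ) - 1) / 2)

/-- The norm `|ỹ|` of the first `d-1` coordinates of `y`. -/
noncomputable def tnorm (d : ℕ) (y : Ed d) : ℝ :=
  Real.sqrt (∑ i : Fin d, if (i : ℕ) < d - 1 then (y i) ^ 2 else 0)

/-- The function `s_ε`. -/
noncomputable def sExit (d : ℕ) (α ε : ℝ) (y : Ed d) : ℝ :=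
  Cexit d α * (max (ε ^ 2 - tnorm d y ^ 2) 0) ^ (α / 2)

/-- The cylinder `Π_ε`. -/
def cylPi (d : ℕ) (ε : ℝ) : Set (Ed d) := {y | tnorm d y < ε}

/-- The hyperplane `F = {y : y_d = 1}`. -/
def hyperF (d : ℕ) : Set (Ed d) := {y | lastCoord d y = 1}

/-- The Riesz kernel `h(y) = |y|^{α-d}`. -/
noncomputable def rieszH (d : ℕ) (α : ℝ) (y : Ed d) : ℝ := ‖y‖ ^ (α - (d : ℝ))

/-- The inversion `T x = x/|x|²`. -/
noncomputable def inversion (d : ℕ) (x : Ed d) : Ed d := (‖x‖ ^ 2)⁻¹ • x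

/-- The shifted cone `V_Θ = Γ_Θ + e_d/2`. -/
def Vcone (d : ℕ) (Θ : ℝ) : Set (Ed d) := {y | y - (1 / 2 : ℝ) • eLast d ∈ cone d Θ}

/-- The spindle `L_ε = T(V_Θ)` with `ε = tan(Θ/2)`, i.e. `Θ = 2 arctan ε`. -/
def Lspindle (d : ℕ) (ε : ℝ) : Set (Ed d) := inversion d '' Vcone d (2 * Real.arctan ε)

/-- The curvilinear projection `y* = T(e_d/2 + (Ty - e_d/2)/(2|Ty - e_d/2|))`. -/
noncomputable def ystar (d : ℕ) (y : Ed d) : Ed d :=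
  inversion d ((1 / 2 : ℝ) • eLast d +
    (2 * ‖inversion d y - (1 / 2 : ℝ) • eLast d‖)⁻¹ • (inversion d y - (1 / 2 : ℝ) • eLast d))

open scoped Classical in
/-- The function `s*_ε`. -/
noncomputable def sStar (d : ℕ) (α ε : ℝ) (y : Ed d) : ℝ :=
  if y ∈ Lspindle d ε then Cexit d α * (max (ε ^ 2 - tnorm d (ystar d y) ^ 2) 0) ^ (α / 2)
  else 0

open scoped Classical in
/-- The function `u = K(h s*_ε)`, i.e. `u(y) = s*_ε(Ty)`, `u(0) = 0`. -/
noncomputable def uFn (d : ℕ) (α ε : ℝ) (y : Ed d) : ℝ :=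
  if y = 0 then 0 else sStar d α ε (inversion d y)

/-- The spherical profile `φ_Θ`. -/
noncomputable def profileFn (d : ℕ) (α Θ : ℝ) (θ : Ed d) : ℝ :=
  2 ^ α * Cexit d α *
    (max (Real.tan (Θ / 2) ^ 2 - ‖eLast d - θ‖ ^ 2 / ‖eLast d + θ‖ ^ 2) 0) ^ (α / 2)

/-- Laplacian on ℝ^d as the sum of pure second partial derivatives. -/
noncomputable def lapE (d : ℕ) (u : Ed d → ℝ) (x : Ed d) : ℝ :=
  ∑ i : Fin d,
    iteratedFDeriv ℝ 2 u x ![EuclideanSpace.single i (1 : ℝ), EuclideanSpace.single i (1 : ℝ)]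

/-- Laplacian on ℝ^d × ℝ as the sum of the d+1 pure second partial derivatives. -/
noncomputable def lapProd (d : ℕ) (U : Ed d × ℝ → ℝ) (p : Ed d × ℝ) : ℝ :=
  (∑ i : Fin d, iteratedFDeriv ℝ 2 U p
      ![(EuclideanSpace.single i (1 : ℝ), (0 : ℝ)), (EuclideanSpace.single i (1 : ℝ), (0 : ℝ))]) +
    iteratedFDeriv ℝ 2 U p ![((0 : Ed d), (1 : ℝ)), ((0 : Ed d), (1 : ℝ))]

/-- The Poisson kernel `P_t(x)` for the upper half-space. -/
noncomputable def poissonK (d : ℕ) (t : ℝ) (x : Ed d) : ℝ :=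
  Real.Gamma (((d : ℝ) + 1) / 2) / π ^ (((d : ℝ) + 1) / 2) * t *
    (‖x‖ ^ 2 + t ^ 2) ^ (-((d : ℝ) + 1) / 2)

end

section KernelBounds

theorem quadratic_ge_quarter {r t : ℝ} (hr0 : 0 < r) (ht : -1 ≤ t) (ht1 : t < 1) :
    (1 - t) / 4 ≤ r ^ 2 - 2 * r * t + 1 := by
  rcases le_total (1 / 4) r with h | h <;> nlinarith [sq_nonneg (1 - r)]

theorem quadratic_pos {r t : ℝ} (hr0 : 0 < r) (ht : -1 ≤ t) (ht1 : t < 1) :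
    0 < r ^ 2 - 2 * r * t + 1 := by
  linarith [quadratic_ge_quarter hr0 ht ht1]

theorem intervalIntegrable_rpow_mul_quadratic_rpow {a p t : ℝ} (ha : -1 < a) (hp : 0 ≤ p)
    (ht : -1 ≤ t) (ht1 : t < 1) :
    IntervalIntegrable (fun r : ℝ => r ^ a * (r ^ 2 - 2 * r * t + 1) ^ (-p / 2)) volume 0 1 := by
  have hdom : IntervalIntegrable (fun r : ℝ => r ^ a * ((1 - t) / 4) ^ (-p / 2)) volume 0 1 :=
    (intervalIntegral.intervalIntegrable_rpow' ha).mul_const _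
  rw [intervalIntegrable_iff_integrableOn_Ioo_of_le zero_le_one] at hdom ⊢
  refine hdom.mono' (Measurable.aestronglyMeasurable (by fun_prop)) ?_
  refine (ae_restrict_iff' measurableSet_Ioo).2 (Eventually.of_forall fun r hr => ?_)
  have hq := quadratic_pos hr.1 ht ht1
  rw [Real.norm_of_nonneg (by have := hr.1; positivity)]
  exact mul_le_mul_of_nonneg_left
    (Real.rpow_le_rpow_of_nonpos (by linarith) (quadratic_ge_quarter hr.1 ht ht1) (by linarith))
    (Real.rpow_nonneg hr.1.le _)

/-- The integrand on `(1, ∞)`, pulled back to `(0, 1)` by `r ↦ r⁻¹`. -/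
theorem inv_rpow_mul_quadratic_rpow {a p r t : ℝ} (hr0 : 0 < r) (ht : -1 ≤ t) (ht1 : t < 1) :
    |-(r ^ 2)⁻¹| • (r⁻¹ ^ a * (r⁻¹ ^ 2 - 2 * r⁻¹ * t + 1) ^ (-p / 2)) =
      r ^ (p - 2 - a) * (r ^ 2 - 2 * r * t + 1) ^ (-p / 2) := by
  have hq := quadratic_pos hr0 ht ht1
  have hinv : r⁻¹ ^ 2 - 2 * r⁻¹ * t + 1 = (r ^ 2 - 2 * r * t + 1) * r ^ (-2 : ℝ) := by
    rw [Real.rpow_neg hr0.le, Real.rpow_two]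
    field_simp
    ring
  rw [hinv, Real.mul_rpow hq.le (Real.rpow_nonneg hr0.le _), ← Real.rpow_mul hr0.le,
    abs_neg, abs_of_pos (by positivity), smul_eq_mul, Real.inv_rpow hr0.le, ← Real.rpow_neg hr0.le,
    ← Real.rpow_two, ← Real.rpow_neg hr0.le]
  have hexp : r ^ (p - 2 - a) = r ^ (-2 : ℝ) * r ^ (-a) * r ^ (-2 * (-p / 2)) := by
    rw [← Real.rpow_add hr0, ← Real.rpow_add hr0]
    ring_nf
  rw [hexp]
  ring

theorem inv_image_Ioo_zero_one : (fun r : ℝ => r⁻¹) '' Ioo 0 1 = Ioi 1 := by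
  rw [image_inv_eq_inv, inv_Ioo_0_left one_pos, inv_one]

theorem integral_Ioi_rpow_mul_quadratic_rpow {a p t : ℝ} (ha : -1 < a) (hap : a < p - 1)
    (hp : 0 ≤ p) (ht : -1 ≤ t) (ht1 : t < 1) :
    ∫ r in Ioi (0 : ℝ), r ^ a * (r ^ 2 - 2 * r * t + 1) ^ (-p / 2) =
      ∫ r in (0 : ℝ)..1, (r ^ a + r ^ (p - 2 - a)) * (r ^ 2 - 2 * r * t + 1) ^ (-p / 2) := by
  have hint := intervalIntegrable_rpow_mul_quadratic_rpow ha hp ht ht1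
  have hint' := intervalIntegrable_rpow_mul_quadratic_rpow (a := p - 2 - a) (by linarith) hp ht ht1
  have hderiv : ∀ r ∈ Ioo (0 : ℝ) 1, HasDerivWithinAt (fun r : ℝ => r⁻¹) (-(r ^ 2)⁻¹) (Ioo 0 1) r :=
    fun r hr => (hasDerivAt_inv hr.1.ne').hasDerivWithinAt
  have hinj : InjOn (fun r : ℝ => r⁻¹) (Ioo 0 1) := inv_injective.injOn
  have hpull : EqOn
      (fun r : ℝ => |-(r ^ 2)⁻¹| • (r⁻¹ ^ a * (r⁻¹ ^ 2 - 2 * r⁻¹ * t + 1) ^ (-p / 2)))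
      (fun r => r ^ (p - 2 - a) * (r ^ 2 - 2 * r * t + 1) ^ (-p / 2)) (Ioo 0 1) :=
    fun r hr => inv_rpow_mul_quadratic_rpow hr.1 ht ht1
  have htail : IntegrableOn (fun r : ℝ => r ^ a * (r ^ 2 - 2 * r * t + 1) ^ (-p / 2)) (Ioi 1) := by
    rw [← inv_image_Ioo_zero_one, integrableOn_image_iff_integrableOn_abs_deriv_smul
      measurableSet_Ioo hderiv hinj, integrableOn_congr_fun hpull measurableSet_Ioo]
    exact (intervalIntegrable_iff_integrableOn_Ioo_of_le zero_le_one).1 hint'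
  have htail_eq : ∫ r in Ioi (1 : ℝ), r ^ a * (r ^ 2 - 2 * r * t + 1) ^ (-p / 2) =
      ∫ r in (0 : ℝ)..1, r ^ (p - 2 - a) * (r ^ 2 - 2 * r * t + 1) ^ (-p / 2) := by
    rw [← inv_image_Ioo_zero_one,
      integral_image_eq_integral_abs_deriv_smul measurableSet_Ioo hderiv hinj,
      setIntegral_congr_fun measurableSet_Ioo hpull, intervalIntegral.integral_of_le zero_le_one,
      integral_Ioc_eq_integral_Ioo]
  have hsplit : Ioi (0 : ℝ) = Ioc 0 1 ∪ Ioi 1 := (Ioc_union_Ioi_eq_Ioi zero_le_one).symm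
  rw [hsplit, setIntegral_union Ioc_disjoint_Ioi_same measurableSet_Ioi
    ((intervalIntegrable_iff_integrableOn_Ioc_of_le zero_le_one).1 hint) htail, htail_eq,
    ← intervalIntegral.integral_of_le zero_le_one, ← intervalIntegral.integral_add hint hint']
  simp only [add_mul]

/-- The weight of the kernel difference after folding `(1, ∞)` onto `(0, 1)`. -/
noncomputable def foldedWeight (D α lam r : ℝ) : ℝ :=
  (1 - r ^ lam) * (r ^ (α - lam - 1) - r ^ (D - 1))

theorem foldedWeight_eq {D α lam r : ℝ} (hr0 : 0 < r) :
    foldedWeight D α lam r =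
      r ^ (D + lam - 1) + r ^ (α - lam - 1) - (r ^ (D - 1) + r ^ (α - 1)) := by
  have h1 : r ^ (D + lam - 1) = r ^ lam * r ^ (D - 1) := by
    rw [← Real.rpow_add hr0]; ring_nf
  have h2 : r ^ (α - 1) = r ^ lam * r ^ (α - lam - 1) := by
    rw [← Real.rpow_add hr0]; ring_nf
  rw [foldedWeight, h1, h2]
  ring

theorem intervalIntegrable_foldedWeight_mul {D α lam t : ℝ} (hD : 0 < D)
    (hlam : 0 < lam) (hlamα : lam < α) (ht : -1 ≤ t) (ht1 : t < 1) :
    IntervalIntegrable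
      (fun r => foldedWeight D α lam r * (r ^ 2 - 2 * r * t + 1) ^ (-(D + α) / 2)) volume 0 1 := by
  have hI := fun (a : ℝ) (ha : -1 < a) => intervalIntegrable_rpow_mul_quadratic_rpow
    (p := D + α) ha (by linarith) ht ht1
  refine (((hI (D + lam - 1) (by linarith)).add (hI (α - lam - 1) (by linarith))).sub
    ((hI (D - 1) (by linarith)).add (hI (α - 1) (by linarith)))).congr_ae ?_
  rw [uIoc_of_le zero_le_one]
  refine (ae_restrict_iff' measurableSet_Ioc).2 (Eventually.of_forall fun r hr => ?_)
  simp only [foldedWeight_eq hr.1]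
  ring

theorem uKernel_sub_uKernel_zero {d : ℕ} {α lam t : ℝ} (hd : 0 < d)
    (hlam : 0 < lam) (hlamα : lam < α) (ht : -1 ≤ t) (ht1 : t < 1) :
    uKernel d α lam t - uKernel d α 0 t =
      ∫ r in (0 : ℝ)..1,
        foldedWeight d α lam r * (r ^ 2 - 2 * r * t + 1) ^ (-((d : ℝ) + α) / 2) := by
  have hD : (0 : ℝ) < d := by exact_mod_cast hd
  have hI := fun (a : ℝ) (ha : -1 < a) => intervalIntegrable_rpow_mul_quadratic_rpow
    (p := (d : ℝ) + α) ha (by linarith) ht ht1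
  have hI2 : ∀ a b : ℝ, -1 < a → -1 < b → IntervalIntegrable
      (fun r : ℝ => (r ^ a + r ^ b) * (r ^ 2 - 2 * r * t + 1) ^ (-((d : ℝ) + α) / 2))
      volume 0 1 := fun a b ha hb => by
    simpa only [add_mul] using (hI a ha).add (hI b hb)
  rw [uKernel, uKernel,
    integral_Ioi_rpow_mul_quadratic_rpow (by linarith) (by linarith) (by linarith) ht ht1,
    integral_Ioi_rpow_mul_quadratic_rpow (by linarith) (by linarith) (by linarith) ht ht1,
    ← intervalIntegral.integral_sub (hI2 _ _ (by linarith) (by linarith))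
      (hI2 _ _ (by linarith) (by linarith))]
  refine intervalIntegral.integral_congr_Ioo_of_le zero_le_one fun r hr => ?_
  simp only [foldedWeight_eq hr.1]
  ring_nf

theorem foldedWeight_nonneg {D α lam r : ℝ} (hD : α ≤ D) (hlam : 0 < lam)
    (hr0 : 0 < r) (hr1 : r ≤ 1) : 0 ≤ foldedWeight D α lam r :=
  mul_nonneg (sub_nonneg.2 (Real.rpow_le_one hr0.le hr1 hlam.le))
    (sub_nonneg.2 (Real.rpow_le_rpow_of_exponent_ge hr0 hr1 (by linarith)))

theorem foldedWeight_le_rpow {D α lam r : ℝ} (hlam : 0 < lam) (hr0 : 0 < r)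
    (hr1 : r ≤ 1) : foldedWeight D α lam r ≤ r ^ (α - lam - 1) := by
  have h1 : r ^ (D + lam - 1) ≤ r ^ (D - 1) :=
    Real.rpow_le_rpow_of_exponent_ge hr0 hr1 (by linarith)
  have h2 := Real.rpow_nonneg hr0.le (α - 1)
  rw [foldedWeight_eq hr0]
  linarith

theorem le_foldedWeight {D α lam r : ℝ} (hr0 : 0 < r) :
    r ^ (α - lam - 1) - r ^ (α - 1) - r ^ (D - 1) ≤ foldedWeight D α lam r := by
  have h1 := Real.rpow_nonneg hr0.le (D + lam - 1)
  rw [foldedWeight_eq hr0]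
  linarith

theorem foldedWeight_le_sq {D α lam r : ℝ} (hD : 1 ≤ D) (hD' : α ≤ D) (hα2 : α < 2) (hlam : 0 < lam)
    (hlamα : lam < α) (hr : 1 / 2 ≤ r) (hr1 : r ≤ 1) :
    foldedWeight D α lam r ≤ 4 * D * (1 - r) ^ 2 := by
  have hr0 : 0 < r := by linarith
  have h1 : 1 - r ^ lam ≤ 2 * (1 - r) := by
    have : r ^ (2 : ℝ) ≤ r ^ lam := Real.rpow_le_rpow_of_exponent_ge hr0 hr1 (by linarith)
    rw [Real.rpow_two] at this
    nlinarith
  have h2 : r ^ (α - lam - 1) - r ^ (D - 1) ≤ 2 * D * (1 - r) := by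
    have hB : 1 + D * (r - 1) ≤ r ^ D := by
      simpa using one_add_mul_self_le_rpow_one_add (s := r - 1) (by linarith) hD
    have h3 : r ^ (α - lam - 1) ≤ r ^ (-1 : ℝ) :=
      Real.rpow_le_rpow_of_exponent_ge hr0 hr1 (by linarith)
    have h4 : r ^ (-1 : ℝ) - r ^ (D - 1) = (1 - r ^ D) / r := by
      rw [Real.rpow_sub_one hr0.ne', Real.rpow_neg_one]; field_simp
    have h5 : (1 - r ^ D) / r ≤ 2 * D * (1 - r) := by
      rw [div_le_iff₀ hr0]
      nlinarith [mul_nonneg (mul_nonneg (by linarith : 0 ≤ D) (sub_nonneg.2 hr1))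
        (by linarith : 0 ≤ 2 * r - 1)]
    linarith
  calc foldedWeight D α lam r ≤ 2 * (1 - r) * (2 * D * (1 - r)) :=
        mul_le_mul h1 h2 (sub_nonneg.2 (Real.rpow_le_rpow_of_exponent_ge hr0 hr1 (by linarith)))
          (by linarith)
    _ = _ := by ring

theorem one_sub_mul_le_quadratic_rpow {p r t : ℝ} (hp : 1 ≤ p) (hr0 : 0 < r) (hr1 : r ≤ 1)
    (ht : -1 ≤ t) (ht1 : t < 1) : 1 - p * r ≤ (r ^ 2 - 2 * r * t + 1) ^ (-p / 2) := by
  have hq := quadratic_pos hr0 ht ht1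
  have hB : 1 - p * r ≤ (1 - r) ^ p := by
    have := one_add_mul_self_le_rpow_one_add (s := -r) (by linarith) hp
    rw [← sub_eq_add_neg] at this
    linarith
  refine hB.trans ?_
  calc (1 - r) ^ p ≤ ((1 + r)⁻¹) ^ p := by
        refine Real.rpow_le_rpow (by linarith) ?_ (by linarith)
        rw [← one_div, le_div_iff₀ (by linarith)]
        nlinarith
    _ = ((1 + r) ^ 2) ^ (-p / 2) := by
        rw [← Real.rpow_two, ← Real.rpow_mul (by linarith), Real.inv_rpow (by linarith),
          ← Real.rpow_neg (by linarith)]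
        ring_nf
    _ ≤ _ := Real.rpow_le_rpow_of_nonpos hq (by nlinarith) (by linarith)

theorem quadratic_rpow_le_one_add_mul {p r t : ℝ} (hp : 1 ≤ p) (hr0 : 0 < r) (hr : r ≤ 1 / 2)
    (ht1 : t < 1) : (r ^ 2 - 2 * r * t + 1) ^ (-p / 2) ≤ 1 + p * 2 ^ p * r := by
  have hs : 0 < 1 - r := by linarith
  have hB : 1 - p * r ≤ (1 - r) ^ p := by
    have := one_add_mul_self_le_rpow_one_add (s := -r) (by linarith) hp
    rw [← sub_eq_add_neg] at this
    linarith
  have hinv : (1 - r) ^ (-p) ≤ 2 ^ p := by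
    rw [Real.rpow_neg hs.le, ← Real.inv_rpow hs.le]
    refine Real.rpow_le_rpow (by positivity) ?_ (by linarith)
    rw [inv_le_comm₀ hs (by norm_num)]
    linarith
  calc (r ^ 2 - 2 * r * t + 1) ^ (-p / 2) ≤ ((1 - r) ^ 2) ^ (-p / 2) :=
        Real.rpow_le_rpow_of_nonpos (by positivity) (by nlinarith) (by linarith)
    _ = (1 - r) ^ (-p) := by
        rw [← Real.rpow_two, ← Real.rpow_mul hs.le]
        ring_nf
    _ = 1 + (1 - (1 - r) ^ p) * (1 - r) ^ (-p) := by
        rw [sub_mul, ← Real.rpow_add hs]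
        simp
    _ ≤ 1 + p * r * 2 ^ p := by
        gcongr
        linarith
    _ = _ := by ring

theorem quadratic_rpow_le_near_one {p r t : ℝ} (hp : 0 ≤ p) (hr : 1 / 2 ≤ r) (ht1 : t < 1) :
    (r ^ 2 - 2 * r * t + 1) ^ (-p / 2) ≤ ((1 - r) ^ 2 + (1 - t)) ^ (-p / 2) :=
  Real.rpow_le_rpow_of_nonpos (by nlinarith [sq_nonneg (1 - r)]) (by nlinarith) (by linarith)

theorem foldedWeight_mul_le {D α lam r t : ℝ} (hD : 2 ≤ D) (hα : 0 < α) (hα2 : α < 2)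
    (hlam : 0 < lam) (hlamα : lam < α) (hr0 : 0 < r) (hr1 : r < 1) (ht1 : t < 1) :
    foldedWeight D α lam r * (r ^ 2 - 2 * r * t + 1) ^ (-(D + α) / 2) ≤
      r ^ (α - lam - 1) + (D + α) * 2 ^ (D + α) +
        4 * D * ((1 - r) ^ 2 * ((1 - r) ^ 2 + (1 - t)) ^ (-(D + α) / 2)) := by
  have hnear : 0 ≤ (1 - r) ^ 2 * ((1 - r) ^ 2 + (1 - t)) ^ (-(D + α) / 2) :=
    mul_nonneg (sq_nonneg _) (Real.rpow_nonneg (by nlinarith [sq_nonneg (1 - r)]) _)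
  have hq : 0 ≤ (r ^ 2 - 2 * r * t + 1) ^ (-(D + α) / 2) :=
    Real.rpow_nonneg (by nlinarith [sq_nonneg (1 - r)]) _
  have hrp := Real.rpow_nonneg hr0.le (α - lam - 1)
  have hK : 0 ≤ (D + α) * 2 ^ (D + α) := by positivity
  rcases le_total r (1 / 2) with h | h
  · have h1 := quadratic_rpow_le_one_add_mul (p := D + α) (by linarith) hr0 h ht1
    have h2 : r ^ (α - lam - 1) * r ≤ 1 := by
      rw [← Real.rpow_add_one hr0.ne']
      exact Real.rpow_le_one hr0.le hr1.le (by linarith)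
    calc _ ≤ r ^ (α - lam - 1) * (1 + (D + α) * 2 ^ (D + α) * r) :=
          mul_le_mul (foldedWeight_le_rpow hlam hr0 hr1.le) h1 hq hrp
      _ = r ^ (α - lam - 1) + (D + α) * 2 ^ (D + α) * (r ^ (α - lam - 1) * r) := by ring
      _ ≤ _ := by nlinarith
  · calc _ ≤ 4 * D * (1 - r) ^ 2 * ((1 - r) ^ 2 + (1 - t)) ^ (-(D + α) / 2) :=
          mul_le_mul
            (foldedWeight_le_sq (by linarith) (by linarith) hα2 hlam hlamα h hr1.le)
            (quadratic_rpow_le_near_one (by linarith) h ht1) hq (by positivity)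
      _ ≤ _ := by nlinarith

/-- The contribution of a neighbourhood of `r = 1` is dominated by an integrable function whose
integral is controlled by `max 1 (m ^ (-(p - 3) / 2))`. -/
theorem exists_dominating_near_one {p : ℝ} (hp : 2 < p) (hne : p ≠ 3) :
    ∃ K : ℝ, 0 ≤ K ∧ ∀ m : ℝ, 0 < m → ∃ g : ℝ → ℝ, IntervalIntegrable g volume 0 1 ∧
      (∀ r ∈ Ioo (0 : ℝ) 1, (1 - r) ^ 2 * ((1 - r) ^ 2 + m) ^ (-p / 2) ≤ g r) ∧
      ∫ r in (0 : ℝ)..1, g r ≤ K * max 1 (m ^ (-(p - 3) / 2)) := by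
  rcases hne.lt_or_gt with h3 | h3
  · refine ⟨1 / (3 - p), by have := sub_pos.2 h3; positivity, fun m hm =>
      ⟨fun r => (1 - r) ^ (2 - p), ?_, fun r hr => ?_, ?_⟩⟩
    · have := (intervalIntegral.intervalIntegrable_rpow' (r := 2 - p) (a := 1) (b := 0)
        (by linarith)).comp_sub_left 1
      simpa using this
    · have hs : 0 < 1 - r := by linarith [hr.2]
      calc (1 - r) ^ 2 * ((1 - r) ^ 2 + m) ^ (-p / 2) ≤ (1 - r) ^ 2 * ((1 - r) ^ 2) ^ (-p / 2) := by
            exact mul_le_mul_of_nonneg_left (Real.rpow_le_rpow_of_nonpos (by positivity)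
              (by linarith) (by linarith)) (sq_nonneg _)
        _ = (1 - r) ^ (2 - p) := by
            rw [← Real.rpow_two, ← Real.rpow_mul hs.le, ← Real.rpow_add hs]
            ring_nf
    · rw [intervalIntegral.integral_comp_sub_left (fun x => x ^ (2 - p)) 1,
        integral_rpow (Or.inl (by linarith))]
      have h0 : (3 : ℝ) - p ≠ 0 := by linarith
      have h1 : (2 : ℝ) - p + 1 = 3 - p := by ring
      simp only [sub_zero, sub_self, h1, Real.one_rpow, Real.zero_rpow h0]
      exact le_mul_of_one_le_right (one_div_nonneg.2 (by linarith)) (le_max_left _ _)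
  · refine ⟨2 ^ ((p - 2) / 2) / (p - 3), by have := sub_pos.2 h3; positivity, fun m hm => ?_⟩
    set w := √m with hw
    have hw0 : 0 < w := Real.sqrt_pos.2 hm
    have hwm : w ^ 2 = m := Real.sq_sqrt hm.le
    refine ⟨fun r => 2 ^ ((p - 2) / 2) * (1 + w - r) ^ (2 - p), ?_, fun r hr => ?_, ?_⟩
    · refine (ContinuousOn.intervalIntegrable ?_)
      rw [uIcc_of_le zero_le_one]
      refine continuousOn_const.mul (ContinuousOn.rpow_const (by fun_prop) fun r hr => Or.inl ?_)
      linarith [hr.2]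
    · have hs : 0 < 1 - r := by linarith [hr.2]
      have hsw : 0 < 1 + w - r := by linarith
      calc (1 - r) ^ 2 * ((1 - r) ^ 2 + m) ^ (-p / 2)
          ≤ ((1 - r) ^ 2 + m) * ((1 - r) ^ 2 + m) ^ (-p / 2) := by
            gcongr
            linarith
        _ = ((1 - r) ^ 2 + m) ^ ((2 - p) / 2) := by
            rw [mul_comm, ← Real.rpow_add_one (by positivity)]
            ring_nf
        _ ≤ ((1 + w - r) ^ 2 / 2) ^ ((2 - p) / 2) := by
            refine Real.rpow_le_rpow_of_nonpos (by positivity) ?_ (by linarith)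
            nlinarith [sq_nonneg (1 - r - w)]
        _ = 2 ^ ((p - 2) / 2) * (1 + w - r) ^ (2 - p) := by
            rw [Real.div_rpow (by positivity) (by norm_num), ← Real.rpow_two,
              ← Real.rpow_mul hsw.le, div_eq_mul_inv, ← Real.rpow_neg (by norm_num), mul_comm]
            ring_nf
    · rw [intervalIntegral.integral_const_mul,
        intervalIntegral.integral_comp_sub_left (fun x => x ^ (2 - p)) (1 + w),
        integral_rpow (Or.inr ⟨by linarith, notMem_uIcc_of_lt (by linarith) (by linarith)⟩)]
      have h1 : (2 : ℝ) - p + 1 = -(p - 3) := by ring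
      have h2 : m ^ (-(p - 3) / 2) = w ^ (-(p - 3)) := by
        rw [← hwm, ← Real.rpow_two, ← Real.rpow_mul hw0.le]
        ring_nf
      have h3' : 0 < p - 3 := by linarith
      rw [h1, h2, sub_zero, add_sub_cancel_left]
      calc 2 ^ ((p - 2) / 2) * (((1 + w) ^ (-(p - 3)) - w ^ (-(p - 3))) / -(p - 3))
          = 2 ^ ((p - 2) / 2) / (p - 3) * (w ^ (-(p - 3)) - (1 + w) ^ (-(p - 3))) := by
            field_simp
            ring
        _ ≤ _ := by
            gcongr
            exact le_max_of_le_right (by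
              linarith [Real.rpow_nonneg (by linarith : 0 ≤ 1 + w) (-(p - 3))])

theorem integral_rpow_sub_one {a : ℝ} (ha : 0 < a) : ∫ r in (0 : ℝ)..1, r ^ (a - 1) = 1 / a := by
  rw [integral_rpow (Or.inl (by linarith))]
  simp [Real.zero_rpow ha.ne']

theorem one_div_sub_le_uKernel_sub {d : ℕ} {α lam t : ℝ} (hd : 2 ≤ d) (hα : 0 < α) (hα2 : α < 2)
    (hlam : 0 < lam) (hlamα : lam < α) (ht : -1 ≤ t) (ht1 : t < 1) :
    1 / (α - lam) - (1 / α + 1 / d + (d + α)) ≤ uKernel d α lam t - uKernel d α 0 t := by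
  have hD : (2 : ℝ) ≤ d := by exact_mod_cast hd
  have hI := fun (a : ℝ) (ha : 0 < a) =>
    intervalIntegral.intervalIntegrable_rpow' (r := a - 1) (a := 0) (b := 1) (by linarith)
  have hε := sub_pos.2 hlamα
  have hD0 : (0 : ℝ) < d := by linarith
  have hint := (((hI _ hε).sub (hI _ hα)).sub (hI _ hD0)).sub
    (intervalIntegrable_const (c := (d + α)))
  rw [uKernel_sub_uKernel_zero (by lia) hlam hlamα ht ht1]
  calc 1 / (α - lam) - (1 / α + 1 / d + (d + α))
      = ∫ r in (0 : ℝ)..1,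
          (r ^ (α - lam - 1) - r ^ (α - 1) - r ^ ((d : ℝ) - 1) - ((d : ℝ) + α)) := by
        rw [intervalIntegral.integral_sub (((hI _ hε).sub (hI _ hα)).sub (hI _ hD0))
            intervalIntegrable_const,
          intervalIntegral.integral_sub ((hI _ hε).sub (hI _ hα)) (hI _ hD0),
          intervalIntegral.integral_sub (hI _ hε) (hI _ hα), integral_rpow_sub_one hε,
          integral_rpow_sub_one hα, integral_rpow_sub_one hD0]
        simp
        ring
    _ ≤ _ := by
        refine intervalIntegral.integral_mono_on_of_le_Ioo zero_le_one hint
          (intervalIntegrable_foldedWeight_mul hD0 hlam hlamα ht ht1) fun r hr => ?_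
        have hw := foldedWeight_nonneg (D := d) (α := α) (by linarith) hlam hr.1 hr.2.le
        have hw1 := foldedWeight_le_rpow (D := d) (α := α) hlam hr.1 hr.2.le
        have hw2 := le_foldedWeight (D := d) (α := α) (lam := lam) hr.1
        have hq := mul_le_mul_of_nonneg_left (one_sub_mul_le_quadratic_rpow (p := d + α)
          (by linarith) hr.1 hr.2.le ht ht1) hw
        have h2 : foldedWeight d α lam r * r ≤ 1 := by
          refine (mul_le_mul_of_nonneg_right hw1 hr.1.le).trans ?_
          rw [← Real.rpow_add_one hr.1.ne']
          exact Real.rpow_le_one hr.1.le hr.2.le (by linarith)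
        have h3 := mul_le_mul_of_nonneg_left h2 (by linarith : 0 ≤ (d : ℝ) + α)
        linarith

theorem exists_uKernel_sub_le {d : ℕ} {α : ℝ} (hd : 2 ≤ d) (hα : 0 < α) (hα2 : α < 2)
    (hne : (d : ℝ) + α ≠ 3) :
    ∃ C : ℝ, 0 < C ∧ ∀ lam : ℝ, 0 < lam → lam < α → ∀ t ∈ Ico (-1 : ℝ) 1,
      uKernel d α lam t - uKernel d α 0 t ≤
        1 / (α - lam) + C + C * max 1 ((1 - t) ^ (-((d : ℝ) + α - 3) / 2)) := by
  have hD : (2 : ℝ) ≤ d := by exact_mod_cast hd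
  obtain ⟨K, hK, hdom⟩ := exists_dominating_near_one (p := d + α) (by linarith) hne
  set A : ℝ := (d + α) * 2 ^ ((d : ℝ) + α) with hAdef
  have hA : 0 < A := by positivity
  refine ⟨A + 4 * d * K, by positivity, fun lam hlam hlamα t ht => ?_⟩
  obtain ⟨g, hg, hle, hint⟩ := hdom (1 - t) (by linarith [ht.2])
  have hε := sub_pos.2 hlamα
  have hI := intervalIntegral.intervalIntegrable_rpow' (r := α - lam - 1) (a := 0) (b := 1)
    (by linarith)
  rw [uKernel_sub_uKernel_zero (by lia) hlam hlamα ht.1 ht.2]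
  set M := max 1 ((1 - t) ^ (-((d : ℝ) + α - 3) / 2))
  have hM : 0 ≤ M := zero_le_one.trans (le_max_left _ _)
  calc _ ≤ ∫ r in (0 : ℝ)..1, (r ^ (α - lam - 1) + A + 4 * d * g r) := by
        refine intervalIntegral.integral_mono_on_of_le_Ioo zero_le_one
          (intervalIntegrable_foldedWeight_mul (by linarith) hlam hlamα ht.1 ht.2)
          ((hI.add intervalIntegrable_const).add (hg.const_mul _)) fun r hr => ?_
        refine (foldedWeight_mul_le hD hα hα2 hlam hlamα hr.1 hr.2 ht.2).trans ?_
        gcongr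
        exact hle r hr
    _ = 1 / (α - lam) + A + 4 * d * ∫ r in (0 : ℝ)..1, g r := by
        rw [intervalIntegral.integral_add (hI.add intervalIntegrable_const) (hg.const_mul _),
          intervalIntegral.integral_add hI intervalIntegrable_const, integral_rpow_sub_one hε,
          intervalIntegral.integral_const_mul]
        simp [hAdef]
    _ ≤ 1 / (α - lam) + A + 4 * d * (K * M) := by gcongr
    _ ≤ _ := by
        have : 0 ≤ 4 * d * K := by positivity
        nlinarith

end KernelBounds

/-- two-sided bounds for `u_λ(t) - u_0(t)` when `0 < λ < α < λ+1`. -/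
theorem uKernel_diff_bounds (d : ℕ) (hd : 2 ≤ d) (α : ℝ) (hα : 0 < α) (hα2 : α < 2)
    (hne : (d : ℝ) + α ≠ 3) :
    (∃ c : ℝ, 0 < c ∧ ∀ lam : ℝ, 0 < lam → lam < α → α < lam + 1 →
      ∀ t ∈ Set.Ico (-1 : ℝ) 1,
        1 / (α - lam) - c ≤ uKernel d α lam t - uKernel d α 0 t) ∧
    (∀ δ ∈ Set.Ioo (0 : ℝ) 1, ∃ C : ℝ, 0 < C ∧ ∀ lam : ℝ, 0 < lam → lam < α → α < lam + 1 →
      ∀ t ∈ Set.Ico (-1 : ℝ) 1,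
        uKernel d α lam t - uKernel d α 0 t ≤
          1 / (α - lam) + C / (α - lam) ^ (1 - δ) +
            C * max 1 ((1 - t) ^ (-((d : ℝ) + α - 3) / 2)) / (α - lam) ^ δ) := by
  constructor
  · refine ⟨1 / α + 1 / d + (d + α), by positivity, fun lam hlam hlamα _ t ht => ?_⟩
    exact one_div_sub_le_uKernel_sub hd hα hα2 hlam hlamα ht.1 ht.2
  · intro δ hδ
    obtain ⟨C, hC, h⟩ := exists_uKernel_sub_le hd hα hα2 hne
    refine ⟨C, hC, fun lam hlam hlamα hα1 t ht => (h lam hlam hlamα t ht).trans ?_⟩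
    have hε : 0 < α - lam := sub_pos.2 hlamα
    have hle : ∀ a : ℝ, 0 < a → ∀ B : ℝ, 0 ≤ B → B ≤ B / (α - lam) ^ a := fun a ha B hB =>
      le_div_self hB (Real.rpow_pos_of_pos hε a) (Real.rpow_le_one hε.le (by linarith) ha.le)
    gcongr
    · exact hle _ (by linarith [hδ.2]) C hC.le
    · exact hle δ hδ.1 _ (by positivity)
end

section
/- For every α ∈ (0,2) and all real numbers s, t with 0 < s < t: t^{α/2} - s^{α/2} ≥ (α/8)·(t-s)·min(s^{α/2-1}, (t-s)^{α/2-1}). -/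
open MeasureTheory Metric Real Set Filter RealInnerProductSpace
open scoped ENNReal

/-- The tangent line of the concave power `x ↦ x ^ p`, `0 ≤ p ≤ 1`, at `t` lies above its graph. -/
theorem mul_sub_mul_rpow_sub_one_le_rpow_sub_rpow {p s t : ℝ} (hp : 0 ≤ p) (hp1 : p ≤ 1)
    (hs : 0 ≤ s) (ht : 0 < t) : p * ((t - s) * t ^ (p - 1)) ≤ t ^ p - s ^ p := by
  have bernoulli : (1 + (s / t - 1)) ^ p ≤ 1 + p * (s / t - 1) :=
    rpow_one_add_le_one_add_mul_self (by linarith [div_nonneg hs ht.le]) hp hp1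
  rw [add_sub_cancel, div_rpow hs ht.le, div_le_iff₀ (rpow_pos_of_pos ht p)] at bernoulli
  have tangent : p * ((t - s) * t ^ (p - 1)) = t ^ p - (1 + p * (s / t - 1)) * t ^ p := by
    rw [rpow_sub_one ht.ne']
    field_simp
    ring
  linarith

/-- If `t ≤ 2 * m` and `0 ≤ p ≤ 1`, then `t ^ (p - 1)` is at least half of `m ^ (p - 1)`. -/
theorem half_mul_rpow_sub_one_le {p m t : ℝ} (hp : 0 ≤ p) (hp1 : p ≤ 1) (hm : 0 < m) (ht : 0 < t)
    (htm : t ≤ 2 * m) : 1 / 2 * m ^ (p - 1) ≤ t ^ (p - 1) := by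
  have two_pow : (1 / 2 : ℝ) ≤ 2 ^ (p - 1) := by
    rw [rpow_sub_one two_ne_zero]
    linarith [one_le_rpow one_le_two hp]
  calc 1 / 2 * m ^ (p - 1) ≤ 2 ^ (p - 1) * m ^ (p - 1) := by gcongr
    _ = (2 * m) ^ (p - 1) := (mul_rpow two_pos.le hm.le).symm
    _ ≤ t ^ (p - 1) := rpow_le_rpow_of_nonpos ht htm (by linarith)

/-- sharp Hölder-type lower bound for differences of powers. -/
theorem rpow_diff_lower (α : ℝ) (hα : 0 < α) (hα2 : α < 2) (s t : ℝ) (hs : 0 < s)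
    (hst : s < t) :
    α / 8 * ((t - s) * min (s ^ (α / 2 - 1)) ((t - s) ^ (α / 2 - 1))) ≤
      t ^ (α / 2) - s ^ (α / 2) := by
  have hd : 0 < t - s := sub_pos.2 hst
  have ht : 0 < t := hs.trans hst
  have hp : 0 ≤ α / 2 := by linarith
  have hp1 : α / 2 ≤ 1 := by linarith
  have half_min : 1 / 2 * min (s ^ (α / 2 - 1)) ((t - s) ^ (α / 2 - 1)) ≤ t ^ (α / 2 - 1) := by
    rcases le_total (t - s) s with h | h
    · have := half_mul_rpow_sub_one_le hp hp1 hs ht (by linarith)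
      linarith [min_le_left (s ^ (α / 2 - 1)) ((t - s) ^ (α / 2 - 1))]
    · have := half_mul_rpow_sub_one_le hp hp1 hd ht (by linarith)
      linarith [min_le_right (s ^ (α / 2 - 1)) ((t - s) ^ (α / 2 - 1))]
  calc α / 8 * ((t - s) * min (s ^ (α / 2 - 1)) ((t - s) ^ (α / 2 - 1)))
      = α / 4 * ((t - s) * (1 / 2 * min (s ^ (α / 2 - 1)) ((t - s) ^ (α / 2 - 1)))) := by ring
    _ ≤ α / 2 * ((t - s) * t ^ (α / 2 - 1)) := by gcongr; norm_num
    _ ≤ t ^ (α / 2) - s ^ (α / 2) :=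
      mul_sub_mul_rpow_sub_one_le_rpow_sub_rpow hp hp1 hs.le ht
end

section
/- There exists a constant c > 0, depending only on α, such that for all ε ∈ (0,1/20), t ∈ (0,1) and a ∈ [0,1/2] the following holds. Set r = (1+t²)/(2t) and ρ = √(r²-a²) - (1-t²)/(2t). If ρ < ε, then (ε²-ρ²)^{α/2} - (ε²-t²)₊^{α/2} ≤ c·ε^α·a^α. -/
open MeasureTheory Metric Real Set Filter RealInnerProductSpace
open scoped ENNReal

/-- On the circle of radius `r = (1 + t²) / (2t)`, the distance `ρ` to the axis at height `a` is at
least `t (1 - 2a²)`. -/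
lemma mul_one_sub_two_sq_le_sqrt_sub {t a : ℝ} (ht : 0 < t) (ha : a ^ 2 ≤ 1 / 4) :
    t * (1 - 2 * a ^ 2) ≤
      Real.sqrt (((1 + t ^ 2) / (2 * t)) ^ 2 - a ^ 2) - (1 - t ^ 2) / (2 * t) := by
  obtain ⟨r, hr⟩ : ∃ r, r = (1 + t ^ 2) / (2 * t) := ⟨_, rfl⟩
  have hrt : 2 * (r * t) = 1 + t ^ 2 := by rw [hr]; field_simp
  have hsub : (1 - t ^ 2) / (2 * t) = r - t := by rw [hr]; field_simp; ring
  rw [← hr, hsub]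
  have hsqrt : r - 2 * t * a ^ 2 ≤ Real.sqrt (r ^ 2 - a ^ 2) := by
    apply Real.le_sqrt_of_sq_le
    have hprod : 0 ≤ a ^ 2 * (t ^ 2 * (1 / 4 - a ^ 2)) := by
      have := sub_nonneg.2 ha
      positivity
    have hat : 0 ≤ a ^ 2 * t ^ 2 := by positivity
    have hexp : (r - 2 * t * a ^ 2) ^ 2
        = r ^ 2 - 2 * a ^ 2 * (2 * (r * t)) + 4 * t ^ 2 * a ^ 2 * a ^ 2 := by ring
    rw [hexp, hrt]
    nlinarith [sq_nonneg a]
  linarith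

/-- bound for the difference `s_ε(z) - s*_ε(z)` expressed in scalar form,
with `ρ = √(r²-a²) - (1-t²)/(2t)`, `r = (1+t²)/(2t)`. -/
theorem sExit_sub_sStar_scalar (α : ℝ) (hα : 0 < α) (hα2 : α < 2) :
    ∃ c : ℝ, 0 < c ∧ ∀ ε ∈ Set.Ioo (0 : ℝ) (1 / 20), ∀ t ∈ Set.Ioo (0 : ℝ) 1,
      ∀ a ∈ Set.Icc (0 : ℝ) (1 / 2),
        Real.sqrt (((1 + t ^ 2) / (2 * t)) ^ 2 - a ^ 2) - (1 - t ^ 2) / (2 * t) < ε →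
        (ε ^ 2 - (Real.sqrt (((1 + t ^ 2) / (2 * t)) ^ 2 - a ^ 2) -
              (1 - t ^ 2) / (2 * t)) ^ 2) ^ (α / 2) -
            (max (ε ^ 2 - t ^ 2) 0) ^ (α / 2) ≤ c * ε ^ α * a ^ α := by
  refine ⟨4 ^ α, by positivity, ?_⟩
  rintro ε ⟨hε, -⟩ t ⟨ht, -⟩ a ⟨ha, ha'⟩ hρ
  have ha2 : a ^ 2 ≤ 1 / 4 := by nlinarith
  have hlow := mul_one_sub_two_sq_le_sqrt_sub ht ha2
  generalize Real.sqrt (((1 + t ^ 2) / (2 * t)) ^ 2 - a ^ 2) - (1 - t ^ 2) / (2 * t) = ρ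
    at hρ hlow ⊢
  have hhalf : t / 2 ≤ t * (1 - 2 * a ^ 2) := by nlinarith
  have hρ0 : 0 < ρ := by linarith
  have ht2 : t ^ 2 ≤ 4 * ε ^ 2 := by nlinarith
  have hρ2 : (t * (1 - 2 * a ^ 2)) ^ 2 ≤ ρ ^ 2 := pow_le_pow_left₀ (by linarith) hlow 2
  have hdiff : t ^ 2 - ρ ^ 2 ≤ (4 * ε * a) ^ 2 := by
    nlinarith [mul_le_mul_of_nonneg_right ht2 (sq_nonneg a), sq_nonneg (t * a ^ 2)]
  have hle : ε ^ 2 - ρ ^ 2 ≤ max (ε ^ 2 - t ^ 2) 0 + (4 * ε * a) ^ 2 := by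
    linarith [le_max_left (ε ^ 2 - t ^ 2) 0]
  have hpow : ((4 * ε * a) ^ 2) ^ (α / 2) = 4 ^ α * ε ^ α * a ^ α := by
    rw [← Real.rpow_natCast_mul (by positivity), Real.mul_rpow (by positivity) ha,
      Real.mul_rpow (by positivity) hε.le]
    norm_num [mul_div_cancel₀]
  rw [sub_le_iff_le_add', ← hpow]
  calc (ε ^ 2 - ρ ^ 2) ^ (α / 2)
      ≤ (max (ε ^ 2 - t ^ 2) 0 + (4 * ε * a) ^ 2) ^ (α / 2) :=
        Real.rpow_le_rpow (by nlinarith) hle (by positivity)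
    _ ≤ _ := Real.rpow_add_le_add_rpow (le_max_right _ _) (sq_nonneg _) (by positivity)
        (by linarith)
end

section
/- Let t ∈ (0,1) and a ∈ [-1,1]. Set r = (1+t²)/(2t) and ρ = √(r²-a²) - (1-t²)/(2t). Then 0 ≤ ρ ≤ t, a²·t/(2√2) ≤ t - ρ ≤ √2·a²·t, and a²·t²/(2√2) ≤ t² - ρ² ≤ 2√2·a²·t². -/
open MeasureTheory Metric Real Set Filter RealInnerProductSpace
open scoped ENNReal

/-- geometric estimates for the curvilinear projection:
with `r = (1+t²)/(2t)` and `ρ = √(r²-a²) - (1-t²)/(2t)` one has `0 ≤ ρ ≤ t`,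
 `a²t/(2√2) ≤ t - ρ ≤ √2 a² t` and `a²t²/(2√2) ≤ t² - ρ² ≤ 2√2 a² t²`. -/
theorem curvilinear_projection_estimates (t : ℝ) (ht : t ∈ Set.Ioo (0 : ℝ) 1)
    (a : ℝ) (ha : a ∈ Set.Icc (-1 : ℝ) 1) :
    0 ≤ Real.sqrt (((1 + t ^ 2) / (2 * t)) ^ 2 - a ^ 2) - (1 - t ^ 2) / (2 * t) ∧
    Real.sqrt (((1 + t ^ 2) / (2 * t)) ^ 2 - a ^ 2) - (1 - t ^ 2) / (2 * t) ≤ t ∧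
    a ^ 2 * t / (2 * Real.sqrt 2) ≤
      t - (Real.sqrt (((1 + t ^ 2) / (2 * t)) ^ 2 - a ^ 2) - (1 - t ^ 2) / (2 * t)) ∧
    t - (Real.sqrt (((1 + t ^ 2) / (2 * t)) ^ 2 - a ^ 2) - (1 - t ^ 2) / (2 * t)) ≤
      Real.sqrt 2 * a ^ 2 * t ∧
    a ^ 2 * t ^ 2 / (2 * Real.sqrt 2) ≤
      t ^ 2 - (Real.sqrt (((1 + t ^ 2) / (2 * t)) ^ 2 - a ^ 2) - (1 - t ^ 2) / (2 * t)) ^ 2 ∧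
    t ^ 2 - (Real.sqrt (((1 + t ^ 2) / (2 * t)) ^ 2 - a ^ 2) - (1 - t ^ 2) / (2 * t)) ^ 2 ≤
      2 * Real.sqrt 2 * a ^ 2 * t ^ 2 := by
  obtain ⟨ht0, ht1⟩ := ht
  have hasq : a ^ 2 ≤ 1 := by nlinarith [ha.1, ha.2]
  set c := (1 - t ^ 2) / (2 * t) with hc
  have hct : 2 * t * c = 1 - t ^ 2 := by rw [hc]; field_simp
  have hr : (1 + t ^ 2) / (2 * t) = c + t := by rw [hc]; field_simp; ring
  rw [hr]
  have hc0 : 0 ≤ c := div_nonneg (by nlinarith) (by positivity)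
  have hcs : c ≤ √((c + t) ^ 2 - a ^ 2) := Real.le_sqrt_of_sq_le (by nlinarith)
  have hsr : √((c + t) ^ 2 - a ^ 2) ≤ c + t :=
    Real.sqrt_le_iff.2 ⟨by positivity, by nlinarith⟩
  have hsq : √((c + t) ^ 2 - a ^ 2) ^ 2 = (c + t) ^ 2 - a ^ 2 := Real.sq_sqrt (by nlinarith)
  generalize √((c + t) ^ 2 - a ^ 2) = s at hcs hsr hsq ⊢
  obtain ⟨ρ, rfl⟩ : ∃ ρ, s = c + ρ := ⟨s - c, by ring⟩
  rw [add_sub_cancel_left]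
  have hρ0 : 0 ≤ ρ := by linarith
  have hρt : ρ ≤ t := by linarith
  -- `t - ρ` is comparable to `a² t` because `(t - ρ) (2 c + t + ρ) = a²`.
  have hmul : a ^ 2 * t = (t - ρ) * (1 + t * ρ) := by
    linear_combination t * hsq + (t - ρ) * hct
  have hlower : a ^ 2 * t / 2 ≤ t - ρ := by
    have : t * ρ ≤ 1 := by nlinarith
    nlinarith [mul_nonneg (sub_nonneg.2 hρt) (sub_nonneg.2 this)]
  have hupper : t - ρ ≤ a ^ 2 * t := by
    nlinarith [mul_nonneg (sub_nonneg.2 hρt) (mul_nonneg ht0.le hρ0)]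
  have hlower' : a ^ 2 * t ^ 2 / 2 ≤ t ^ 2 - ρ ^ 2 := by
    nlinarith [mul_nonneg (sub_nonneg.2 hρt) hρ0]
  have hupper' : t ^ 2 - ρ ^ 2 ≤ 2 * (a ^ 2 * t ^ 2) := by
    nlinarith [mul_nonneg (sub_nonneg.2 hρt) hρ0, mul_nonneg (sub_nonneg.2 hρt) (sub_nonneg.2 hρt)]
  have hsqrt : 1 ≤ √2 := Real.one_le_sqrt.2 one_le_two
  have hdiv (x : ℝ) (hx : 0 ≤ x) : x / (2 * √2) ≤ x / 2 :=
    div_le_div_of_nonneg_left hx two_pos (by linarith)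
  have hx : 0 ≤ a ^ 2 * t := by positivity
  have hy : 0 ≤ a ^ 2 * t ^ 2 := by positivity
  refine ⟨hρ0, hρt, (hdiv _ hx).trans hlower, ?_, (hdiv _ hy).trans hlower', ?_⟩ <;> nlinarith
end

section
/- Let E ⊆ ℝ^d be open and let Φ : ℝ^d → ℝ be Borel measurable with ∫_{ℝ^d} |Φ(y)|·(1+|y|)^{-d-1} dy < ∞, twice continuously differentiable on E, and such that Δ^{1/2}Φ(x) exists and equals 0 for every x ∈ E. Define U : ℝ^d × ℝ → ℝ by U(x,t) = ∫_{ℝ^d} P_{|t|}(x-y)·Φ(y) dy for t ≠ 0 and U(x,0) = Φ(x). Then U is twice continuously differentiable on the open set D = {(x,t) ∈ ℝ^d × ℝ : t ≠ 0 or x ∈ E} and its Laplacian (the sum of all d+1 pure second partial derivatives) vanishes on D. -/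
open MeasureTheory Metric Real Set Filter RealInnerProductSpace
open scoped ENNReal

namespace PoissonExtension

open scoped Topology ContDiff Convolution

/-- The squared Euclidean norm on `ℝ^d × ℝ`. -/
noncomputable def sqNorm {d : ℕ} (q : Ed d × ℝ) : ℝ := ‖q.1‖ ^ 2 + q.2 ^ 2

variable {d : ℕ}

lemma two_le_infty : (2 : WithTop ℕ∞) ≤ ((⊤ : ℕ∞) : WithTop ℕ∞) :=
  WithTop.coe_le_coe.2 (le_top : (2 : ℕ∞) ≤ ⊤)

lemma sqNorm_sub_comm (p q : Ed d × ℝ) : sqNorm (p - q) = sqNorm (q - p) := by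
  simp only [sqNorm, Prod.fst_sub, Prod.snd_sub, norm_sub_rev p.1]; ring

lemma sqNorm_smul (r : ℝ) (q : Ed d × ℝ) : sqNorm (r • q) = r ^ 2 * sqNorm q := by
  simp only [sqNorm, Prod.smul_fst, Prod.smul_snd, norm_smul, smul_eq_mul, mul_pow, norm_eq_abs,
    sq_abs]; ring

lemma norm_sq_le_sqNorm (q : Ed d × ℝ) : ‖q‖ ^ 2 ≤ sqNorm q := by
  rw [Prod.norm_def, sqNorm]
  rcases max_choice ‖q.1‖ ‖q.2‖ with h | h <;> rw [h]
  · nlinarith [sq_nonneg q.2]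
  · rw [norm_eq_abs, sq_abs]; nlinarith [sq_nonneg ‖q.1‖]

lemma contDiff_sqNorm : ContDiff ℝ ∞ (sqNorm (d := d)) := by
  unfold sqNorm
  exact (contDiff_fst.norm_sq ℝ).add (contDiff_snd.pow 2)

lemma fderiv_sqNorm (q e : Ed d × ℝ) :
    fderiv ℝ sqNorm q e = 2 * (⟪q.1, e.1⟫ + q.2 * e.2) := by
  have h1 : HasFDerivAt (fun q : Ed d × ℝ => ‖q.1‖ ^ 2) _ q :=
    (hasFDerivAt_fst (𝕜 := ℝ) (p := q)).norm_sq
  have h2 : HasFDerivAt (fun q : Ed d × ℝ => q.2 ^ 2) _ q :=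
    (hasFDerivAt_snd (𝕜 := ℝ) (p := q)).pow 2
  have h := (h1.add h2).fderiv
  change fderiv ℝ (sqNorm (d := d)) q = _ at h
  rw [h]
  simp
  ring

lemma iteratedFDeriv_two_diag {f : Ed d × ℝ → ℝ} {q : Ed d × ℝ} (hf : ContDiff ℝ 2 f)
    (e : Ed d × ℝ) :
    iteratedFDeriv ℝ 2 f q ![e, e] = fderiv ℝ (fun q => fderiv ℝ f q e) q e := by
  rw [iteratedFDeriv_two_apply, fderiv_clm_apply]
  · simp
  · exact (hf.fderiv_right (m := 1) (by norm_num)).differentiable (by norm_num) q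
  · fun_prop

lemma lapProd_eq {f : Ed d × ℝ → ℝ} (hf : ContDiff ℝ 2 f) (q : Ed d × ℝ) :
    lapProd d f q = (∑ i : Fin d, fderiv ℝ (fun q => fderiv ℝ f q
      (EuclideanSpace.single i 1, 0)) q (EuclideanSpace.single i 1, 0)) +
      fderiv ℝ (fun q => fderiv ℝ f q (0, 1)) q (0, 1) := by
  simp only [lapProd, iteratedFDeriv_two_diag hf]

lemma fderiv_radial {φ : ℝ → ℝ} (hφ : ContDiff ℝ ∞ φ) (p q e : Ed d × ℝ) :
    fderiv ℝ (fun q => φ (sqNorm (q - p))) q e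
      = deriv φ (sqNorm (q - p)) * (2 * (⟪(q - p).1, e.1⟫ + (q - p).2 * e.2)) := by
  have h1 : HasFDerivAt (fun q : Ed d × ℝ => q - p) (ContinuousLinearMap.id ℝ _) q :=
    (hasFDerivAt_id q).sub_const p
  have h2 : HasFDerivAt sqNorm (fderiv ℝ sqNorm (q - p)) (q - p) :=
    (contDiff_sqNorm.differentiable (by simp) _).hasFDerivAt
  have h3 : HasDerivAt φ (deriv φ (sqNorm (q - p))) (sqNorm (q - p)) :=
    (hφ.differentiable (by simp) _).hasDerivAt
  have h := (h3.comp_hasFDerivAt q (h2.comp q h1)).fderiv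
  change fderiv ℝ (fun q => φ (sqNorm (q - p))) q = _ at h
  rw [h]
  simp [fderiv_sqNorm]

lemma contDiff_radial {φ : ℝ → ℝ} (hφ : ContDiff ℝ ∞ φ) (p : Ed d × ℝ) :
    ContDiff ℝ ∞ (fun q => φ (sqNorm (q - p))) :=
  hφ.comp (contDiff_sqNorm.comp (contDiff_id.sub contDiff_const))

lemma fderiv_fderiv_radial {φ : ℝ → ℝ} (hφ : ContDiff ℝ ∞ φ) (p q e : Ed d × ℝ) :
    fderiv ℝ (fun q => fderiv ℝ (fun q => φ (sqNorm (q - p))) q e) q e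
      = deriv (deriv φ) (sqNorm (q - p)) * (2 * (⟪(q - p).1, e.1⟫ + (q - p).2 * e.2)) ^ 2
        + deriv φ (sqNorm (q - p)) * (2 * sqNorm e) := by
  have hφ' : ContDiff ℝ ∞ (deriv φ) := (contDiff_infty_iff_deriv.1 hφ).2
  simp only [fderiv_radial hφ]
  have h1 : HasFDerivAt (fun q => deriv φ (sqNorm (q - p))) _ q :=
    ((contDiff_radial hφ' p).differentiable (by simp) q).hasFDerivAt
  have hl : HasFDerivAt (fun q : Ed d × ℝ => q - p) (ContinuousLinearMap.id ℝ _) q :=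
    (hasFDerivAt_id q).sub_const p
  have h2 : HasFDerivAt (fun q : Ed d × ℝ => 2 * (⟪(q - p).1, e.1⟫ + (q - p).2 * e.2)) _ q :=
    (((hl.fst.inner ℝ (hasFDerivAt_const e.1 q)).add
      (hl.snd.mul (hasFDerivAt_const e.2 q))).const_mul 2)
  rw [(h1.fun_mul h2).fderiv]
  simp only [add_apply, smul_apply, fderiv_radial hφ',
    smul_eq_mul]
  simp [sqNorm]
  rw [real_inner_comm]
  ring

lemma lapProd_radial {φ : ℝ → ℝ} (hφ : ContDiff ℝ ∞ φ) (p q : Ed d × ℝ) :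
    lapProd d (fun q => φ (sqNorm (q - p))) q
      = 2 * (d + 1) * deriv φ (sqNorm (q - p))
        + 4 * sqNorm (q - p) * deriv (deriv φ) (sqNorm (q - p)) := by
  rw [lapProd_eq ((contDiff_radial hφ p).of_le (two_le_infty))]
  simp only [fderiv_fderiv_radial hφ]
  have h : ∑ i : Fin d, ((q - p).1 i) ^ 2 = ‖(q - p).1‖ ^ 2 := by
    rw [EuclideanSpace.norm_sq_eq]; simp
  simp only [sqNorm, EuclideanSpace.inner_single_right, PiLp.norm_single, inner_zero_right]
  simp [Finset.sum_add_distrib, mul_pow, ← Finset.mul_sum] at h ⊢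
  rw [h]
  ring

lemma isCompact_sqNorm_le (p : Ed d × ℝ) (c : ℝ) : IsCompact {q | sqNorm (q - p) ≤ c} := by
  refine Metric.isCompact_of_isClosed_isBounded ?_ ?_
  · exact isClosed_le (contDiff_sqNorm.continuous.comp (continuous_id.sub continuous_const))
      continuous_const
  · refine (Metric.isBounded_closedBall (x := p) (r := √c)).subset fun q hq => ?_
    rw [mem_closedBall, dist_eq_norm]
    exact Real.le_sqrt_of_sq_le ((norm_sq_le_sqNorm _).trans hq)

lemma tsupport_radial_subset {φ : ℝ → ℝ} {c : ℝ} (hφ : ∀ s, c < s → φ s = 0) (p : Ed d × ℝ) :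
    tsupport (fun q => φ (sqNorm (q - p))) ⊆ {q | sqNorm (q - p) ≤ c} := by
  refine closure_minimal (fun q hq => ?_) (isCompact_sqNorm_le p c).isClosed
  by_contra h
  exact hq (hφ _ (not_le.1 h))

/-- A smooth antitone cut-off, equal to `1` on `(-∞, 0]` and to `0` on `[1, ∞)`. -/
noncomputable def cutoff (s : ℝ) : ℝ := Real.smoothTransition (1 - s)

lemma contDiff_cutoff : ContDiff ℝ ∞ cutoff :=
  Real.smoothTransition.contDiff.comp (contDiff_const.sub contDiff_id)

lemma contDiff_deriv_cutoff : ContDiff ℝ ∞ (deriv cutoff) :=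
  (contDiff_infty_iff_deriv.1 contDiff_cutoff).2

lemma contDiff_deriv_deriv_cutoff : ContDiff ℝ ∞ (deriv (deriv cutoff)) :=
  (contDiff_infty_iff_deriv.1 contDiff_deriv_cutoff).2

lemma cutoff_eq_zero {s : ℝ} (hs : 1 < s) : cutoff s = 0 :=
  Real.smoothTransition.zero_of_nonpos (by linarith)

lemma deriv_cutoff_eq_zero {s : ℝ} (hs : 1 < s) : deriv cutoff s = 0 := by
  have : cutoff =ᶠ[𝓝 s] fun _ => 0 := by
    filter_upwards [lt_mem_nhds hs] with t ht using cutoff_eq_zero ht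
  rw [this.deriv_eq]; simp

lemma deriv_deriv_cutoff_eq_zero {s : ℝ} (hs : 1 < s) : deriv (deriv cutoff) s = 0 := by
  have : deriv cutoff =ᶠ[𝓝 s] fun _ => 0 := by
    filter_upwards [lt_mem_nhds hs] with t ht using deriv_cutoff_eq_zero ht
  rw [this.deriv_eq]; simp

lemma deriv_cutoff_nonpos (s : ℝ) : deriv cutoff s ≤ 0 := by
  have : Antitone cutoff := fun a b hab => Real.smoothTransition.monotone (by linarith)
  exact this.deriv_nonpos

lemma exists_deriv_cutoff_ne_zero : ∃ s, 0 < s ∧ deriv cutoff s ≠ 0 := by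
  obtain ⟨c, hc, h⟩ := exists_deriv_eq_slope cutoff (zero_lt_one (α := ℝ))
    contDiff_cutoff.continuous.continuousOn (contDiff_cutoff.differentiable (by simp)).differentiableOn
  refine ⟨c, hc.1, ?_⟩
  rw [h]
  simp [cutoff]

lemma continuous_deriv_cutoff_sqNorm :
    Continuous (fun y : Ed d × ℝ => deriv cutoff (sqNorm y)) :=
  contDiff_deriv_cutoff.continuous.comp contDiff_sqNorm.continuous

lemma integral_deriv_cutoff_ne_zero : ∫ y : Ed d × ℝ, deriv cutoff (sqNorm y) ≠ 0 := by
  obtain ⟨s, hs, h⟩ := exists_deriv_cutoff_ne_zero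
  have hc : HasCompactSupport (fun y : Ed d × ℝ => -deriv cutoff (sqNorm y)) := by
    refine HasCompactSupport.of_support_subset_isCompact (isCompact_sqNorm_le 0 1) fun y hy => ?_
    by_contra h
    refine hy ?_
    simp only [mem_ofPred_eq, sub_zero, not_le] at h
    simp [deriv_cutoff_eq_zero h]
  have := continuous_deriv_cutoff_sqNorm.neg.integral_pos_of_hasCompactSupport_nonneg_nonzero
    (μ := volume) (x := ((0 : Ed d), √s)) hc (fun y => by simpa using deriv_cutoff_nonpos _)
    (by simpa [sqNorm, Real.sq_sqrt hs.le] using h)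
  simp only [Pi.neg_apply, integral_neg] at this
  linarith

lemma hasDerivAt_scaled_deriv_cutoff (n : ℕ) (s : ℝ) {r : ℝ} (hr : r ≠ 0) :
    HasDerivAt (fun r => (r ^ n)⁻¹ * deriv cutoff (s / r ^ 2))
      (-(n * (r ^ (n + 1))⁻¹ * deriv cutoff (s / r ^ 2))
        - 2 * s * (r ^ (n + 3))⁻¹ * deriv (deriv cutoff) (s / r ^ 2)) r := by
  have h1 : HasDerivAt (fun r : ℝ => (r ^ n)⁻¹) _ r := (hasDerivAt_pow n r).inv (pow_ne_zero _ hr)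
  have h2 : HasDerivAt (fun r : ℝ => s / r ^ 2) _ r :=
    (hasDerivAt_const r s).div (hasDerivAt_pow 2 r) (pow_ne_zero _ hr)
  have h3 := (contDiff_deriv_cutoff.differentiable (by simp) (s / r ^ 2)).hasDerivAt
  have h := h1.mul (h3.comp r h2)
  refine h.congr_deriv ?_
  rcases n with _ | n
  · simp; field_simp
  · simp only [Function.comp, Nat.add_sub_cancel]
    push_cast
    field_simp
    ring

lemma lapProd_cutoff (p q : Ed d × ℝ) {r : ℝ} (hr : r ≠ 0) :
    lapProd d (fun q => cutoff (sqNorm (q - p) / r ^ 2)) q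
      = 2 * (d + 1) * (deriv cutoff (sqNorm (q - p) / r ^ 2) / r ^ 2)
        + 4 * sqNorm (q - p) * (deriv (deriv cutoff) (sqNorm (q - p) / r ^ 2) / r ^ 4) := by
  have h1 : ∀ s, deriv (fun s => cutoff (s / r ^ 2)) s = deriv cutoff (s / r ^ 2) / r ^ 2 :=
    fun s => by
      simp only [div_eq_inv_mul]
      rw [deriv_comp_mul_left, smul_eq_mul]
  have h2 : ∀ s, deriv (fun s => deriv cutoff (s / r ^ 2) / r ^ 2) s
      = deriv (deriv cutoff) (s / r ^ 2) / r ^ 4 := fun s => by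
    simp only [div_eq_inv_mul]
    rw [deriv_const_mul_field, deriv_comp_mul_left (r ^ 2)⁻¹ (deriv cutoff), smul_eq_mul]
    field_simp
  rw [lapProd_radial (φ := fun s => cutoff (s / r ^ 2))
    (contDiff_cutoff.comp (contDiff_id.div_const _)), funext h1, h2]

instance : (volume : Measure (Ed d × ℝ)).IsAddHaarMeasure :=
  inferInstanceAs (Measure.IsAddHaarMeasure ((volume : Measure (Ed d)).prod (volume : Measure ℝ)))

lemma integral_comp_add_smul (v : Ed d × ℝ → ℝ) (g : ℝ → ℝ) (p : Ed d × ℝ) {r : ℝ} (hr : 0 < r) :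
    ∫ y, v (p + r • y) * g (sqNorm y)
      = ∫ q, v q * ((r ^ (d + 1))⁻¹ * g (sqNorm (q - p) / r ^ 2)) := by
  have h := Measure.integral_comp_smul_of_nonneg (μ := (volume : Measure (Ed d × ℝ)))
    (fun y => v (p + y) * g (sqNorm y / r ^ 2)) r (hR := hr.le)
  have hfin : Module.finrank ℝ (Ed d × ℝ) = d + 1 := by simp
  rw [hfin] at h
  have h1 : ∀ y : Ed d × ℝ, sqNorm (r • y) / r ^ 2 = sqNorm y := fun y => by
    rw [sqNorm_smul]; field_simp
  simp only [h1] at h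
  rw [h, ← integral_sub_right_eq_self (fun y => v (p + y) * g (sqNorm y / r ^ 2)) p, smul_eq_mul,
    ← integral_const_mul]
  congr 1 with q
  simp only [add_sub_cancel]
  ring

/-- Mean value property over radially weighted balls. -/
lemma integral_cutoff_eq {v : Ed d × ℝ → ℝ} (hv : Continuous v) {p : Ed d × ℝ} {R : ℝ} (hR : 0 < R)
    (hw : ∀ ζ : Ed d × ℝ → ℝ, ContDiff ℝ ∞ ζ → tsupport ζ ⊆ {q | sqNorm (q - p) ≤ R ^ 2} →
      ∫ q, v q * lapProd d ζ q = 0) :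
    ∫ q, v q * ((R ^ (d + 1))⁻¹ * deriv cutoff (sqNorm (q - p) / R ^ 2))
      = v p * ∫ y : Ed d × ℝ, deriv cutoff (sqNorm y) := by
  set J : ℝ → ℝ := fun r => ∫ y, v (p + r • y) * deriv cutoff (sqNorm y) with hJ
  have hJc : Continuous J := by
    have h := continuous_parametric_integral_of_continuous
      (μ := (volume : Measure (Ed d × ℝ)))
      (f := fun (r : ℝ) y => v (p + r • y) * deriv cutoff (sqNorm y))
      (by
        refine (hv.comp (by fun_prop)).mul (continuous_deriv_cutoff_sqNorm.comp continuous_snd))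
      (isCompact_sqNorm_le (0 : Ed d × ℝ) 1)
    convert h using 2 with r
    refine (setIntegral_eq_integral_of_forall_compl_eq_zero fun y hy => ?_).symm
    simp only [mem_ofPred_eq, sub_zero, not_le] at hy
    rw [deriv_cutoff_eq_zero hy, mul_zero]
  have hJd : ∀ r ∈ Ioo 0 R, HasDerivAt J 0 r := by
    intro r hr
    have hr0 := hr.1
    set F : ℝ → Ed d × ℝ → ℝ := fun r q =>
      v q * ((r ^ (d + 1))⁻¹ * deriv cutoff (sqNorm (q - p) / r ^ 2)) with hF
    set F' : ℝ → Ed d × ℝ → ℝ := fun r q =>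
      v q * (-(((d + 1 : ℕ) : ℝ) * (r ^ (d + 1 + 1))⁻¹ * deriv cutoff (sqNorm (q - p) / r ^ 2))
        - 2 * sqNorm (q - p) * (r ^ (d + 1 + 3))⁻¹ *
          deriv (deriv cutoff) (sqNorm (q - p) / r ^ 2)) with hF'
    have hsq : Continuous (fun q : Ed d × ℝ => sqNorm (q - p)) :=
      contDiff_sqNorm.continuous.comp (continuous_id.sub continuous_const)
    have hc1 := contDiff_deriv_cutoff.continuous
    have hc2 := contDiff_deriv_deriv_cutoff.continuous
    have hKc : IsCompact (Icc (r / 2) R ×ˢ {q : Ed d × ℝ | sqNorm (q - p) ≤ R ^ 2}) :=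
      isCompact_Icc.prod (isCompact_sqNorm_le p _)
    have hout : ∀ x ∈ Ioo (r / 2) R, ∀ q, ¬ sqNorm (q - p) ≤ R ^ 2 →
        1 < sqNorm (q - p) / x ^ 2 := fun x hx q hq => by
      have hx0 : 0 < x := lt_trans (by linarith) hx.1
      rw [lt_div_iff₀ (by positivity), one_mul]
      have := hx.2
      nlinarith
    have hF'c : ContinuousOn (Function.uncurry F')
        (Icc (r / 2) R ×ˢ {q : Ed d × ℝ | sqNorm (q - p) ≤ R ^ 2}) := by
      have hne : ∀ x ∈ Icc (r / 2) R ×ˢ {q : Ed d × ℝ | sqNorm (q - p) ≤ R ^ 2}, x.1 ≠ 0 :=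
        fun x hx => (lt_of_lt_of_le (by linarith) hx.1.1).ne'
      have hs2 : Continuous (fun x : ℝ × (Ed d × ℝ) => sqNorm (x.2 - p)) :=
        hsq.comp continuous_snd
      have hdiv : ContinuousOn (fun x : ℝ × (Ed d × ℝ) => sqNorm (x.2 - p) / x.1 ^ 2)
          (Icc (r / 2) R ×ˢ {q : Ed d × ℝ | sqNorm (q - p) ≤ R ^ 2}) :=
        hs2.continuousOn.div (by fun_prop) fun x hx => pow_ne_zero _ (hne x hx)
      have hinv : ∀ n : ℕ, ContinuousOn (fun x : ℝ × (Ed d × ℝ) => (x.1 ^ n)⁻¹)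
          (Icc (r / 2) R ×ˢ {q : Ed d × ℝ | sqNorm (q - p) ≤ R ^ 2}) := fun n =>
        ContinuousOn.inv₀ (by fun_prop) fun x hx => pow_ne_zero _ (hne x hx)
      refine (hv.comp continuous_snd).continuousOn.mul (ContinuousOn.sub (ContinuousOn.neg ?_) ?_)
      · exact (continuousOn_const.mul (hinv _)).mul (hc1.comp_continuousOn hdiv)
      · exact ((continuousOn_const.mul hs2.continuousOn).mul (hinv _)).mul
          (hc2.comp_continuousOn hdiv)
    obtain ⟨C, hC⟩ := hKc.exists_bound_of_continuousOn hF'c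
    have hmeas : MeasurableSet {q : Ed d × ℝ | sqNorm (q - p) ≤ R ^ 2} :=
      (isCompact_sqNorm_le p _).measurableSet
    have hcomp : ∀ x, 0 < x → Continuous (F x) := fun x hx =>
      hv.mul (continuous_const.mul (hc1.comp (hsq.div_const _)))
    have hcomp' : Continuous (F' r) :=
      hv.mul (((continuous_const.mul (hc1.comp (hsq.div_const _))).neg).sub
        (((continuous_const.mul hsq).mul continuous_const).mul (hc2.comp (hsq.div_const _))))
    have hmem : r ∈ Ioo (r / 2) R := ⟨by linarith, hr.2⟩
    have key := hasDerivAt_integral_of_dominated_loc_of_deriv_le (μ := volume)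
      (F := F) (F' := F') (x₀ := r) (s := Ioo (r / 2) R)
      (bound := indicator {q : Ed d × ℝ | sqNorm (q - p) ≤ R ^ 2} fun _ => C)
      (isOpen_Ioo.mem_nhds hmem)
      (by
        filter_upwards [lt_mem_nhds hr0] with x hx using (hcomp x hx).aestronglyMeasurable)
      (by
        refine (hcomp r hr0).integrable_of_hasCompactSupport
          (HasCompactSupport.of_support_subset_isCompact (isCompact_sqNorm_le p (R ^ 2))
            fun q hq => ?_)
        by_contra h
        exact hq (by simp [F, deriv_cutoff_eq_zero (hout r hmem q h)]))
      hcomp'.aestronglyMeasurable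
      (by
        refine Eventually.of_forall fun q x hx => ?_
        by_cases hq : sqNorm (q - p) ≤ R ^ 2
        · rw [indicator_of_mem (by exact hq)]
          exact hC (x, q) ⟨Ioo_subset_Icc_self hx, hq⟩
        · rw [indicator_of_notMem (by exact hq)]
          simp [F', deriv_cutoff_eq_zero (hout x hx q hq),
            deriv_deriv_cutoff_eq_zero (hout x hx q hq)])
      ((integrable_indicator_iff hmeas).2 (integrableOn_const
        (isCompact_sqNorm_le p _).measure_lt_top.ne))
      (by
        refine Eventually.of_forall fun q x hx => ?_
        have hx0 : 0 < x := lt_trans (by linarith) hx.1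
        exact (hasDerivAt_scaled_deriv_cutoff (d + 1) _ hx0.ne').const_mul _)
    have h0 : ∫ q, F' r q = 0 := by
      have hz := hw (fun q => cutoff (sqNorm (q - p) / r ^ 2))
        (contDiff_radial (φ := fun s => cutoff (s / r ^ 2))
          (contDiff_cutoff.comp (contDiff_id.div_const _)) p)
        (by
          refine (tsupport_radial_subset (φ := fun s => cutoff (s / r ^ 2)) (c := r ^ 2)
            (fun s hs => cutoff_eq_zero ((one_lt_div (by positivity)).2 hs)) p).trans
            fun q hq => ?_
          have : r ^ 2 ≤ R ^ 2 := by gcongr; exact hr.2.le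
          exact le_trans hq this)
      have : ∀ q, F' r q = -((r ^ d)⁻¹ / 2) *
          (v q * lapProd d (fun q => cutoff (sqNorm (q - p) / r ^ 2)) q) := fun q => by
        rw [lapProd_cutoff p q hr0.ne']
        simp only [F']
        push_cast
        field_simp
        ring
      simp only [this]
      rw [integral_const_mul, hz, mul_zero]
    rw [h0] at key
    refine key.2.congr_of_eventuallyEq ?_
    filter_upwards [lt_mem_nhds hr0] with x hx
    exact integral_comp_add_smul v (deriv cutoff) p hx
  obtain ⟨c, hc, h⟩ := exists_hasDerivAt_eq_slope J (fun _ => 0) hR hJc.continuousOn hJd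
  have hJR : J R = J 0 := by
    rw [sub_zero, eq_comm, div_eq_zero_iff] at h
    rcases h with h | h <;> linarith
  rw [← integral_comp_add_smul v (deriv cutoff) p hR]
  change J R = _
  rw [hJR]
  simp only [hJ, zero_smul, add_zero, integral_const_mul]

lemma fderiv_convolution_apply {v g : Ed d × ℝ → ℝ} (hv : Continuous v) (hg : ContDiff ℝ 1 g)
    (hgc : HasCompactSupport g) (p e : Ed d × ℝ) :
    fderiv ℝ (v ⋆[ContinuousLinearMap.mul ℝ ℝ, volume] g) p e
      = (v ⋆[ContinuousLinearMap.mul ℝ ℝ, volume] fun q => fderiv ℝ g q e) p := by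
  rw [(hgc.hasFDerivAt_convolution_right _ hv.locallyIntegrable hg p).fderiv,
    convolution_precompR_apply _ hv.locallyIntegrable (hgc.fderiv ℝ)
      (hg.continuous_fderiv one_ne_zero)]

lemma fderiv_fderiv_convolution {v g : Ed d × ℝ → ℝ} (hv : Continuous v) (hg : ContDiff ℝ ∞ g)
    (hgc : HasCompactSupport g) (p e : Ed d × ℝ) :
    fderiv ℝ (fun q => fderiv ℝ (v ⋆[ContinuousLinearMap.mul ℝ ℝ, volume] g) q e) p e
      = ∫ q, v q * fderiv ℝ (fun q => fderiv ℝ g q e) (p - q) e := by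
  have hg' : ContDiff ℝ ∞ (fun q => fderiv ℝ g q e) :=
    (hg.fderiv_right (m := ∞) (by simp)).clm_apply contDiff_const
  have hgc' : HasCompactSupport (fun q => fderiv ℝ g q e) := hgc.fderiv_apply (𝕜 := ℝ) e
  have h1 := fderiv_convolution_apply hv (hg.of_le (by simp)) hgc (e := e)
  rw [funext h1, fderiv_convolution_apply hv (hg'.of_le (by simp)) hgc']
  rfl

lemma lapProd_convolution {v g : Ed d × ℝ → ℝ} (hv : Continuous v) (hg : ContDiff ℝ ∞ g)
    (hgc : HasCompactSupport g) (p : Ed d × ℝ) :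
    lapProd d (v ⋆[ContinuousLinearMap.mul ℝ ℝ, volume] g) p
      = ∫ q, v q * lapProd d g (p - q) := by
  have hconv : ContDiff ℝ 2 (v ⋆[ContinuousLinearMap.mul ℝ ℝ, volume] g) :=
    (hgc.contDiff_convolution_right _ hv.locallyIntegrable hg).of_le two_le_infty
  have hint : ∀ e : Ed d × ℝ,
      Integrable fun q => v q * fderiv ℝ (fun q => fderiv ℝ g q e) (p - q) e := fun e => by
    have hg' : ContDiff ℝ ∞ (fun q => fderiv ℝ g q e) :=
      (hg.fderiv_right (m := ∞) (by simp)).clm_apply contDiff_const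
    have hgc' : HasCompactSupport (fun q => fderiv ℝ (fun q => fderiv ℝ g q e) q e) :=
      (hgc.fderiv_apply (𝕜 := ℝ) e).fderiv_apply (𝕜 := ℝ) e
    have hg'' : Continuous (fun q => fderiv ℝ (fun q => fderiv ℝ g q e) q e) :=
      (hg'.continuous_fderiv (by simp)).clm_apply continuous_const
    refine (hv.mul (hg''.comp (continuous_const.sub continuous_id))).integrable_of_hasCompactSupport
      (HasCompactSupport.mul_left ?_)
    exact hgc'.comp_homeomorph (Homeomorph.subLeft p)
  rw [lapProd_eq hconv]
  simp only [fderiv_fderiv_convolution hv hg hgc, lapProd_eq (hg.of_le two_le_infty), mul_add,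
    Finset.mul_sum]
  rw [integral_add (integrable_finsetSum _ fun i _ => hint _) (hint _),
    integral_finsetSum _ fun i _ => hint _]

lemma lapProd_eq_zero_of_notMem_tsupport {ζ : Ed d × ℝ → ℝ} {q : Ed d × ℝ} (hq : q ∉ tsupport ζ) :
    lapProd d ζ q = 0 := by
  have h : iteratedFDeriv ℝ 2 ζ q = 0 :=
    Function.notMem_support.1 fun h => hq (support_iteratedFDeriv_subset 2 h)
  simp [lapProd, h]

/-- Weyl's lemma for continuous functions on `ℝ^d × ℝ`. -/
theorem harmonic_of_weaklyHarmonic {u : Ed d × ℝ → ℝ} {D : Set (Ed d × ℝ)} (hD : IsOpen D)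
    (hu : ContinuousOn u D)
    (hw : ∀ ζ : Ed d × ℝ → ℝ, ContDiff ℝ ∞ ζ → HasCompactSupport ζ → tsupport ζ ⊆ D →
      ∫ q, u q * lapProd d ζ q = 0) :
    ContDiffOn ℝ 2 u D ∧ ∀ p ∈ D, lapProd d u p = 0 := by
  suffices h : ∀ p ∈ D, ContDiffAt ℝ 2 u p ∧ lapProd d u p = 0 from
    ⟨fun p hp => (h p hp).1.contDiffWithinAt, fun p hp => (h p hp).2⟩
  intro p₀ hp₀
  obtain ⟨ε, hε, hεD⟩ := Metric.isOpen_iff.1 hD p₀ hp₀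
  set ρ := ε / 4 with hρ
  have hρ0 : 0 < ρ := by positivity
  have hKD : closedBall p₀ (2 * ρ) ⊆ D :=
    (closedBall_subset_ball (by rw [hρ]; linarith)).trans hεD
  obtain ⟨g, hg⟩ := ContinuousMap.exists_restrict_eq (isClosed_closedBall (x := p₀) (ε := 2 * ρ))
    ⟨(closedBall p₀ (2 * ρ)).domRestrict u, (hu.mono hKD).domRestrict⟩
  have hgu : ∀ q ∈ closedBall p₀ (2 * ρ), g q = u q := fun q hq =>
    DFunLike.congr_fun hg (⟨q, hq⟩ : closedBall p₀ (2 * ρ))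
  have hsub : ∀ p ∈ ball p₀ ρ, {q | sqNorm (q - p) ≤ ρ ^ 2} ⊆ closedBall p₀ (2 * ρ) := by
    intro p hp q hq
    have h1 : dist q p ≤ ρ := by
      rw [dist_eq_norm]
      have := (norm_sq_le_sqNorm (q - p)).trans hq
      exact le_of_sq_le_sq this hρ0.le
    rw [mem_closedBall]
    have := dist_triangle q p p₀
    rw [mem_ball] at hp
    linarith
  have hwg : ∀ p ∈ ball p₀ ρ, ∀ ζ : Ed d × ℝ → ℝ, ContDiff ℝ ∞ ζ →
      tsupport ζ ⊆ {q | sqNorm (q - p) ≤ ρ ^ 2} → ∫ q, g q * lapProd d ζ q = 0 := by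
    intro p hp ζ hζ hs
    rw [← hw ζ hζ ((isCompact_sqNorm_le p _).of_isClosed_subset (isClosed_tsupport ζ) hs)
      ((hs.trans (hsub p hp)).trans hKD)]
    congr 1 with q
    by_cases hq : q ∈ tsupport ζ
    · rw [hgu q (hsub p hp (hs hq))]
    · simp [lapProd_eq_zero_of_notMem_tsupport hq]
  set c := ∫ y : Ed d × ℝ, deriv cutoff (sqNorm y) with hc
  have hc0 : c ≠ 0 := integral_deriv_cutoff_ne_zero
  set φ : ℝ → ℝ := fun s => c⁻¹ * ((ρ ^ (d + 1))⁻¹ * deriv cutoff (s / ρ ^ 2)) with hφ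
  have hφs : ContDiff ℝ ∞ φ := contDiff_const.mul (contDiff_const.mul
    (contDiff_deriv_cutoff.comp (contDiff_id.div_const _)))
  have hφ0 : ∀ s, ρ ^ 2 < s → φ s = 0 := fun s hs => by
    simp [φ, deriv_cutoff_eq_zero ((one_lt_div (by positivity)).2 hs)]
  set ψ : Ed d × ℝ → ℝ := fun y => φ (sqNorm (y - 0)) with hψ
  have hψs : ContDiff ℝ ∞ ψ := contDiff_radial hφs 0
  have hψc : HasCompactSupport ψ :=
    (isCompact_sqNorm_le 0 _).of_isClosed_subset (isClosed_tsupport ψ)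
      (tsupport_radial_subset hφ0 0)
  have heq : u =ᶠ[𝓝 p₀] (g ⋆[ContinuousLinearMap.mul ℝ ℝ, volume] ψ) := by
    filter_upwards [ball_mem_nhds p₀ hρ0] with p hp
    have h := integral_cutoff_eq g.continuous hρ0 (hwg p hp)
    have hup : g p = u p := hgu p (ball_subset_closedBall (ball_subset_ball (by linarith) hp))
    rw [← hup, convolution_def]
    have : ∀ q, ContinuousLinearMap.mul ℝ ℝ (g q) (ψ (p - q)) = c⁻¹ *
        (g q * ((ρ ^ (d + 1))⁻¹ * deriv cutoff (sqNorm (q - p) / ρ ^ 2))) := fun q => by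
      simp only [ψ, φ, sub_zero, sqNorm_sub_comm p q, ContinuousLinearMap.mul_apply']
      ring
    simp only [this]
    rw [integral_const_mul, h, ← hc]
    field_simp
  refine ⟨(((hψc.contDiff_convolution_right _ g.continuous.locallyIntegrable hψs).of_le
    two_le_infty).contDiffAt).congr_of_eventuallyEq heq, ?_⟩
  have hlap : lapProd d u p₀ = lapProd d (g ⋆[ContinuousLinearMap.mul ℝ ℝ, volume] ψ) p₀ := by
    simp only [lapProd, (heq.iteratedFDeriv ℝ 2).eq_of_nhds]
  rw [hlap, lapProd_convolution g.continuous hψs hψc, ← hwg p₀ (mem_ball_self hρ0)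
    (fun q => φ (sqNorm (q - p₀))) (contDiff_radial hφs p₀) (tsupport_radial_subset hφ0 p₀)]
  congr 1 with q
  rw [hψ, lapProd_radial hφs, lapProd_radial hφs, sub_zero, sqNorm_sub_comm]

/-- The normalizing constant of the Poisson kernel. -/
noncomputable def poissonConst (d : ℕ) : ℝ :=
  Real.Gamma (((d : ℝ) + 1) / 2) / π ^ (((d : ℝ) + 1) / 2)

/-- The derivative of the Poisson kernel in the vertical variable. -/
noncomputable def poissonKDeriv (d : ℕ) (t : ℝ) (x : Ed d) : ℝ :=
  poissonConst d * (‖x‖ ^ 2 - d * t ^ 2) * (‖x‖ ^ 2 + t ^ 2) ^ (-((d : ℝ) + 1) / 2 - 1)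

lemma poissonConst_pos (d : ℕ) : 0 < poissonConst d :=
  div_pos (Real.Gamma_pos_of_pos (by positivity)) (by positivity)

lemma poissonK_eq (t : ℝ) (x : Ed d) :
    poissonK d t x = poissonConst d * t * (‖x‖ ^ 2 + t ^ 2) ^ (-((d : ℝ) + 1) / 2) := rfl

lemma poissonK_nonneg {t : ℝ} (ht : 0 ≤ t) (x : Ed d) : 0 ≤ poissonK d t x := by
  rw [poissonK_eq]
  have := poissonConst_pos d
  positivity

lemma poissonK_neg (t : ℝ) (x : Ed d) : poissonK d t (-x) = poissonK d t x := by
  simp [poissonK_eq]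

lemma poissonKDeriv_neg (t : ℝ) (x : Ed d) : poissonKDeriv d t (-x) = poissonKDeriv d t x := by
  simp [poissonKDeriv]

lemma hasDerivAt_rpow_sq_add {t : ℝ} (ht : 0 < t) (x : Ed d) (p : ℝ) :
    HasDerivAt (fun t : ℝ => (‖x‖ ^ 2 + t ^ 2) ^ p)
      (2 * t * p * (‖x‖ ^ 2 + t ^ 2) ^ (p - 1)) t := by
  have h := ((hasDerivAt_pow 2 t).const_add (‖x‖ ^ 2)).rpow_const (p := p)
    (Or.inl (by positivity))
  simpa using h

lemma rpow_sub_one_mul {s : ℝ} (hs : 0 < s) (p : ℝ) : s ^ p = s * s ^ (p - 1) := by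
  rw [rpow_sub_one hs.ne']; field_simp

lemma hasDerivAt_poissonK {t : ℝ} (ht : 0 < t) (x : Ed d) :
    HasDerivAt (fun t => poissonK d t x) (poissonKDeriv d t x) t := by
  have h := ((hasDerivAt_id t).const_mul (poissonConst d)).fun_mul
    (hasDerivAt_rpow_sq_add ht x (-((d : ℝ) + 1) / 2))
  convert! h using 1
  simp only [poissonKDeriv, id]
  rw [rpow_sub_one_mul (s := ‖x‖ ^ 2 + t ^ 2) (by positivity) (-((d : ℝ) + 1) / 2)]
  ring

lemma continuous_poissonK {t : ℝ} (ht : 0 < t) : Continuous (poissonK d t) := by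
  unfold poissonK
  refine continuous_const.mul (Continuous.rpow_const (by fun_prop) fun x => Or.inl ?_)
  positivity

lemma continuous_poissonKDeriv {t : ℝ} (ht : 0 < t) : Continuous (poissonKDeriv d t) := by
  unfold poissonKDeriv
  refine Continuous.mul (by fun_prop) (Continuous.rpow_const (by fun_prop) fun x => Or.inl ?_)
  positivity

lemma abs_poissonKDeriv_le (hd : 1 ≤ d) {t : ℝ} (ht : 0 < t) (x : Ed d) :
    |poissonKDeriv d t x| ≤ poissonConst d * d * (‖x‖ ^ 2 + t ^ 2) ^ (-((d : ℝ) + 1) / 2) := by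
  have hc := poissonConst_pos d
  have hd' : (1 : ℝ) ≤ d := by exact_mod_cast hd
  rw [poissonKDeriv, abs_mul, abs_mul, abs_of_pos hc,
    rpow_sub_one_mul (s := ‖x‖ ^ 2 + t ^ 2) (by positivity) (-((d : ℝ) + 1) / 2),
    abs_of_nonneg (a := (‖x‖ ^ 2 + t ^ 2) ^ (-((d : ℝ) + 1) / 2 - 1)) (by positivity),
    show poissonConst d * d * ((‖x‖ ^ 2 + t ^ 2) * (‖x‖ ^ 2 + t ^ 2) ^ (-((d : ℝ) + 1) / 2 - 1))
      = poissonConst d * (d * (‖x‖ ^ 2 + t ^ 2)) * (‖x‖ ^ 2 + t ^ 2) ^ (-((d : ℝ) + 1) / 2 - 1) by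
      ring]
  gcongr
  rw [abs_le]
  constructor <;> nlinarith [sq_nonneg ‖x‖, sq_nonneg t]

lemma rpow_sq_add_le_norm_rpow (x : Ed d) (hx : x ≠ 0) (t : ℝ) :
    (‖x‖ ^ 2 + t ^ 2) ^ (-((d : ℝ) + 1) / 2) ≤ ‖x‖ ^ (-(d : ℝ) - 1) := by
  have hx' : 0 < ‖x‖ := norm_pos_iff.2 hx
  have h : ‖x‖ ^ (-(d : ℝ) - 1) = (‖x‖ ^ 2) ^ (-((d : ℝ) + 1) / 2) := by
    rw [← rpow_natCast, ← rpow_mul hx'.le]; congr 1; push_cast; ring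
  rw [h]
  exact rpow_le_rpow_of_nonpos (by positivity) (by nlinarith [sq_nonneg t])
    (by have : (0 : ℝ) ≤ d := by positivity
        linarith)

/-- Comparison of the Poisson kernel with the weight `(1 + ‖x‖) ^ (-d - 1)`. -/
lemma rpow_sq_add_le_weight (d : ℕ) {δ : ℝ} (hδ : 0 < δ) : ∃ C > 0, ∀ t, δ ≤ t → ∀ x : Ed d,
    (‖x‖ ^ 2 + t ^ 2) ^ (-((d : ℝ) + 1) / 2) ≤ C * (1 + ‖x‖) ^ (-(d : ℝ) - 1) := by
  set m : ℝ := min 1 (δ ^ 2) / 2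
  have hm : 0 < m := by positivity
  refine ⟨m ^ (-((d : ℝ) + 1) / 2), by positivity, fun t ht x => ?_⟩
  have h : (1 + ‖x‖) ^ (-(d : ℝ) - 1) = ((1 + ‖x‖) ^ 2) ^ (-((d : ℝ) + 1) / 2) := by
    rw [← rpow_natCast, ← rpow_mul (by positivity)]; congr 1; push_cast; ring
  rw [h, ← mul_rpow hm.le (by positivity)]
  refine rpow_le_rpow_of_nonpos (by positivity) ?_
    (by have : (0 : ℝ) ≤ d := by positivity
        linarith)
  have h1 : m ≤ 1 / 2 := by simp only [m]; linarith [min_le_left 1 (δ ^ 2)]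
  have h2 : m ≤ t ^ 2 / 2 := by
    have : δ ^ 2 ≤ t ^ 2 := by gcongr
    simp only [m]; linarith [min_le_right 1 (δ ^ 2)]
  nlinarith [sq_nonneg (1 - ‖x‖), sq_nonneg ‖x‖]

/-- Peetre's inequality for the weight. -/
lemma weight_sub_le (x z : Ed d) :
    (1 + ‖x - z‖) ^ (-(d : ℝ) - 1) ≤ (1 + ‖x‖) ^ ((d : ℝ) + 1) * (1 + ‖z‖) ^ (-(d : ℝ) - 1) := by
  have h : 1 + ‖z‖ ≤ (1 + ‖x‖) * (1 + ‖x - z‖) := by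
    have : ‖z‖ ≤ ‖x‖ + ‖x - z‖ := by
      calc ‖z‖ = ‖x - (x - z)‖ := by simp
        _ ≤ _ := norm_sub_le _ _
    nlinarith [norm_nonneg x, norm_nonneg (x - z)]
  have h2 : (1 + ‖x - z‖) ^ (-(d : ℝ) - 1) = (1 + ‖x‖) ^ ((d : ℝ) + 1) *
      ((1 + ‖x‖) * (1 + ‖x - z‖)) ^ (-(d : ℝ) - 1) := by
    rw [mul_rpow (by positivity) (by positivity), ← mul_assoc, ← rpow_add (by positivity)]
    simp
  rw [h2]
  refine mul_le_mul_of_nonneg_left ?_ (by positivity)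
  exact rpow_le_rpow_of_nonpos (by positivity) h (by have : (0 : ℝ) ≤ d := by positivity
                                                     linarith)

/-- Uniform domination of the Poisson kernel and its vertical derivative. -/
lemma exists_kernel_bound (hd : 1 ≤ d) {δ : ℝ} (hδ : 0 < δ) (M R : ℝ) : ∃ C > 0,
    ∀ t ∈ Icc δ M, ∀ x : Ed d, ‖x‖ ≤ R → ∀ z,
      |poissonK d t (x - z)| ≤ C * (1 + ‖z‖) ^ (-(d : ℝ) - 1) ∧
      |poissonKDeriv d t (x - z)| ≤ C * (1 + ‖z‖) ^ (-(d : ℝ) - 1) := by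
  obtain ⟨C, hC, h⟩ := rpow_sq_add_le_weight d hδ
  have hc := poissonConst_pos d
  have hd' : (0 : ℝ) < d := by exact_mod_cast hd
  refine ⟨poissonConst d * (|M| + d) * (C * (1 + |R|) ^ ((d : ℝ) + 1)), by positivity,
    fun t ht x hx z => ?_⟩
  have ht0 : 0 < t := hδ.trans_le ht.1
  have hw : (‖x - z‖ ^ 2 + t ^ 2) ^ (-((d : ℝ) + 1) / 2) ≤
      C * (1 + |R|) ^ ((d : ℝ) + 1) * (1 + ‖z‖) ^ (-(d : ℝ) - 1) := by
    refine (h t ht.1 (x - z)).trans ?_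
    rw [mul_assoc]
    refine mul_le_mul_of_nonneg_left ((weight_sub_le x z).trans ?_) hC.le
    gcongr
    exact hx.trans (le_abs_self R)
  constructor
  · rw [abs_of_nonneg (poissonK_nonneg ht0.le _), poissonK_eq, mul_assoc _ (C * _)]
    refine mul_le_mul ?_ hw (by positivity) (by positivity)
    gcongr
    linarith [ht.2, le_abs_self M]
  · refine (abs_poissonKDeriv_le hd ht0 _).trans ?_
    rw [mul_assoc _ (C * _)]
    refine mul_le_mul ?_ hw (by positivity) (by positivity)
    gcongr
    linarith [abs_nonneg M]

lemma integrable_weight (d : ℕ) : Integrable fun x : Ed d => (1 + ‖x‖) ^ (-(d : ℝ) - 1) := by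
  have h := integrable_one_add_norm (E := Ed d) (μ := volume) (r := (d : ℝ) + 1) (by simp)
  convert h using 3
  ring

lemma integrable_poissonK (hd : 1 ≤ d) {t : ℝ} (ht : 0 < t) : Integrable (poissonK d t) := by
  obtain ⟨C, -, h⟩ := exists_kernel_bound hd ht t 0
  refine ((integrable_weight d).const_mul C).mono' (continuous_poissonK ht).aestronglyMeasurable
    (Eventually.of_forall fun x => ?_)
  simpa [poissonK_neg] using (h t ⟨le_rfl, le_rfl⟩ 0 (by simp) x).1

lemma integrable_poissonKDeriv (hd : 1 ≤ d) {t : ℝ} (ht : 0 < t) :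
    Integrable (poissonKDeriv d t) := by
  obtain ⟨C, -, h⟩ := exists_kernel_bound hd ht t 0
  refine ((integrable_weight d).const_mul C).mono' (continuous_poissonKDeriv ht).aestronglyMeasurable
    (Eventually.of_forall fun x => ?_)
  simpa [poissonKDeriv_neg] using (h t ⟨le_rfl, le_rfl⟩ 0 (by simp) x).2

lemma integral_one_add_sq_rpow (d : ℕ) :
    Real.Gamma (((d : ℝ) + 1) / 2) * ∫ x : Ed d, (‖x‖ ^ 2 + 1) ^ (-((d : ℝ) + 1) / 2)
      = π ^ (((d : ℝ) + 1) / 2) := by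
  set a : ℝ := ((d : ℝ) + 1) / 2 with ha
  have ha0 : 0 < a := by positivity
  set F : Ed d × ℝ → ℝ := fun q => q.2 ^ (a - 1) * exp (-((‖q.1‖ ^ 2 + 1) * q.2)) with hF
  have hFm : AEStronglyMeasurable F ((volume : Measure (Ed d)).prod (volume.restrict (Ioi 0))) := by
    refine Measurable.aestronglyMeasurable ?_
    fun_prop
  have hslice : ∀ u : ℝ, 0 < u → Integrable (fun x : Ed d => F (x, u)) ∧
      ∫ x : Ed d, F (x, u) = π ^ ((d : ℝ) / 2) * (exp (-u) * u ^ ((1 / 2 : ℝ) - 1)) := by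
    intro u hu
    have h1 : ∀ x : Ed d, F (x, u) = u ^ (a - 1) * exp (-u) * exp (-u * ‖x‖ ^ 2) := fun x => by
      simp only [hF]
      rw [mul_assoc, ← exp_add]; congr 2; ring
    have h2 := GaussianFourier.integral_rexp_neg_mul_sq_norm (V := Ed d) hu
    rw [finrank_euclideanSpace_fin] at h2
    have h3 : Integrable (fun x : Ed d => exp (-u * ‖x‖ ^ 2)) :=
      Integrable.of_integral_ne_zero (by rw [h2]; positivity)
    simp only [h1]
    refine ⟨h3.const_mul _, ?_⟩
    rw [integral_const_mul, h2, div_rpow pi_pos.le hu.le]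
    have h4 : u ^ (a - 1) = u ^ ((1 / 2 : ℝ) - 1) * u ^ ((d : ℝ) / 2) := by
      rw [← rpow_add hu]; congr 1; rw [ha]; ring
    rw [h4]
    have : u ^ ((d : ℝ) / 2) ≠ 0 := by positivity
    field_simp
  have hF0 : ∀ x : Ed d, ∀ u : ℝ, 0 < u → ‖F (x, u)‖ = F (x, u) := fun x u hu =>
    norm_of_nonneg (by simp only [hF]; positivity)
  have hI : Integrable F ((volume : Measure (Ed d)).prod (volume.restrict (Ioi 0))) := by
    refine (integrable_prod_iff' hFm).2 ⟨?_, ?_⟩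
    · filter_upwards [ae_restrict_mem measurableSet_Ioi] with u hu using (hslice u hu).1
    · refine ((Real.GammaIntegral_convergent (s := 1 / 2) (by norm_num)).const_mul
        (π ^ ((d : ℝ) / 2))).congr ?_
      filter_upwards [ae_restrict_mem measurableSet_Ioi] with u hu
      simp only [hF0 _ u hu, (hslice u hu).2]
  have e1 := integral_prod F hI
  have e2 := integral_prod_symm F hI
  have l1 : ∀ x : Ed d, ∫ u in Ioi (0 : ℝ), F (x, u)
      = Real.Gamma a * (‖x‖ ^ 2 + 1) ^ (-((d : ℝ) + 1) / 2) := fun x => by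
    simp only [hF]
    rw [Real.integral_rpow_mul_exp_neg_mul_Ioi ha0 (by positivity), mul_comm, one_div,
      inv_rpow (by positivity), ← rpow_neg (by positivity)]
    congr 2; rw [ha]; ring
  have l2 : ∫ u in Ioi (0 : ℝ), ∫ x : Ed d, F (x, u) = π ^ a := by
    rw [setIntegral_congr_fun measurableSet_Ioi fun u hu => (hslice u hu).2, integral_const_mul,
      ← Real.Gamma_eq_integral (by norm_num), Real.Gamma_one_half_eq, sqrt_eq_rpow,
      ← rpow_add pi_pos]
    congr 1; rw [ha]; ring
  rw [← l2, ← e2, e1, ← integral_const_mul]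
  simp only [l1]

lemma integral_poissonK {t : ℝ} (ht : 0 < t) : ∫ x : Ed d, poissonK d t x = 1 := by
  have h1 : ∫ x : Ed d, poissonK d 1 x = 1 := by
    have h := integral_one_add_sq_rpow d
    simp only [poissonK_eq, one_pow, mul_one]
    rw [integral_const_mul, poissonConst, div_mul_eq_mul_div, h]
    exact div_self (by positivity)
  have h2 := Measure.integral_comp_inv_smul_of_nonneg (volume : Measure (Ed d)) (poissonK d 1) ht.le
  rw [h1, finrank_euclideanSpace_fin, smul_eq_mul, mul_one] at h2
  have h3 : ∀ x : Ed d, poissonK d t x = (t ^ d)⁻¹ * poissonK d 1 (t⁻¹ • x) := fun x => by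
    have e : ‖t⁻¹ • x‖ ^ 2 + 1 ^ 2 = (t ^ 2)⁻¹ * (‖x‖ ^ 2 + t ^ 2) := by
      rw [norm_smul, norm_of_nonneg (by positivity)]; field_simp
    have e2 : ((t ^ 2)⁻¹) ^ (-((d : ℝ) + 1) / 2) = t ^ (d + 1) := by
      rw [← rpow_natCast t 2, ← rpow_neg ht.le, ← rpow_mul ht.le, ← rpow_natCast t (d + 1)]
      congr 1; push_cast; ring
    rw [poissonK_eq, poissonK_eq, e, mul_rpow (by positivity) (by positivity), e2]
    field_simp
    ring
  simp only [h3]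
  rw [integral_const_mul, h2]
  exact inv_mul_cancel₀ (by positivity)

lemma integral_poissonKDeriv (hd : 1 ≤ d) {t : ℝ} (ht : 0 < t) :
    ∫ x : Ed d, poissonKDeriv d t x = 0 := by
  obtain ⟨C, -, h⟩ := exists_kernel_bound hd (half_pos ht) (2 * t) 0
  have hmem : Ioo (t / 2) (2 * t) ∈ 𝓝 t := isOpen_Ioo.mem_nhds ⟨by linarith, by linarith⟩
  have key := (hasDerivAt_integral_of_dominated_loc_of_deriv_le (μ := volume)
    (F := fun t x => poissonK d t x) (F' := fun t x => poissonKDeriv d t x)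
    (bound := fun x => C * (1 + ‖x‖) ^ (-(d : ℝ) - 1)) hmem
    (by filter_upwards [lt_mem_nhds ht] with s hs using
      (continuous_poissonK hs).aestronglyMeasurable)
    (integrable_poissonK hd ht) (continuous_poissonKDeriv ht).aestronglyMeasurable
    (Eventually.of_forall fun x s hs => by
      simpa [poissonKDeriv_neg] using (h s ⟨hs.1.le, hs.2.le⟩ 0 (by simp) x).2)
    ((integrable_weight d).const_mul C)
    (Eventually.of_forall fun x s hs => hasDerivAt_poissonK (by linarith [hs.1]) x)).2
  have h1 : (fun t => ∫ x : Ed d, poissonK d t x) =ᶠ[𝓝 t] fun _ => 1 := by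
    filter_upwards [lt_mem_nhds ht] with s hs using integral_poissonK hs
  exact (key.congr_of_eventuallyEq h1.symm).unique (hasDerivAt_const t 1)

/-- The symmetric second difference of `Φ` at `x`. -/
def secDiff (Φ : Ed d → ℝ) (x w : Ed d) : ℝ := Φ (x + w) + Φ (x - w) - 2 * Φ x

lemma secDiff_zero (Φ : Ed d → ℝ) (x : Ed d) : secDiff Φ x 0 = 0 := by
  simp [secDiff]; ring

lemma measurable_secDiff {Φ : Ed d → ℝ} (hm : Measurable Φ) (x : Ed d) :
    Measurable (secDiff Φ x) := by
  unfold secDiff; fun_prop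

lemma integrable_of_abs_le_weight {κ : Ed d → ℝ} (hκ : Measurable κ) {C : ℝ}
    (hC : ∀ w, |κ w| ≤ C * (1 + ‖w‖) ^ (-(d : ℝ) - 1)) : Integrable κ :=
  ((integrable_weight d).const_mul C).mono' hκ.aestronglyMeasurable (Eventually.of_forall hC)

lemma integrable_kernel_mul {Φ : Ed d → ℝ} (hm : Measurable Φ)
    (hint : Integrable (fun y : Ed d => |Φ y| * (1 + ‖y‖) ^ (-(d : ℝ) - 1)))
    {κ : Ed d → ℝ} (hκ : Measurable κ) {C : ℝ}
    (hC : ∀ w, |κ w| ≤ C * (1 + ‖w‖) ^ (-(d : ℝ) - 1)) (x : Ed d) :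
    Integrable fun y => κ (x - y) * Φ y := by
  have hC0 : 0 ≤ C := by
    have := (abs_nonneg _).trans (hC 0)
    simpa using this
  refine (hint.const_mul (C * (1 + ‖x‖) ^ ((d : ℝ) + 1))).mono'
    (by fun_prop) (Eventually.of_forall fun y => ?_)
  rw [norm_mul, norm_eq_abs, norm_eq_abs]
  calc |κ (x - y)| * |Φ y|
      ≤ (C * ((1 + ‖x‖) ^ ((d : ℝ) + 1) * (1 + ‖y‖) ^ (-(d : ℝ) - 1))) * |Φ y| := by
        gcongr
        exact (hC _).trans (mul_le_mul_of_nonneg_left (weight_sub_le x y) hC0)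
    _ = _ := by ring

/-- Convolution with an even kernel in terms of second differences. -/
lemma integral_kernel_mul_eq {Φ κ : Ed d → ℝ} {x : Ed d} (heven : ∀ w, κ (-w) = κ w)
    (hκ : Integrable κ) (hκΦ : Integrable fun y => κ (x - y) * Φ y) :
    ∫ y, κ (x - y) * Φ y = (∫ w, κ w * secDiff Φ x w) / 2 + Φ x * ∫ w, κ w := by
  have i1 : Integrable fun w => κ w * Φ (x - w) := by
    simpa using hκΦ.comp_sub_left x
  have i2 : Integrable fun w => κ w * Φ (x + w) := by
    simpa [heven] using i1.comp_neg
  have e1 : ∫ w, κ w * Φ (x - w) = ∫ y, κ (x - y) * Φ y := by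
    simpa using integral_sub_left_eq_self (fun y => κ (x - y) * Φ y) volume x
  have e2 : ∫ w, κ w * Φ (x + w) = ∫ y, κ (x - y) * Φ y := by
    rw [← e1]
    simpa [heven] using integral_neg_eq_self (fun w => κ w * Φ (x - w)) volume
  have e3 : ∫ w, κ w * secDiff Φ x w
      = (∫ w, κ w * Φ (x + w)) + (∫ w, κ w * Φ (x - w)) - 2 * Φ x * ∫ w, κ w := by
    have i3 : Integrable fun w => κ w * Φ (x + w) + κ w * Φ (x - w) := i2.add i1
    rw [← integral_add i2 i1, ← integral_const_mul, ← integral_sub i3 (hκ.const_mul _)]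
    congr 1 with w
    simp only [secDiff]
    ring
  rw [e3, e1, e2]
  ring

lemma abs_secDiff_le {Φ : Ed d → ℝ} {x₀ : Ed d} (h : ContDiffAt ℝ 2 Φ x₀) :
    ∃ M > 0, ∃ η > 0, ∀ x ∈ ball x₀ η, ∀ w, ‖w‖ < η → |secDiff Φ x w| ≤ M * ‖w‖ ^ 2 := by
  obtain ⟨K, t, ht, hK⟩ := (h.fderiv_right (m := 1) (by norm_num)).exists_lipschitzOnWith
  have hdiff : ∀ᶠ y in 𝓝 x₀, DifferentiableAt ℝ Φ y := by
    filter_upwards [h.eventually (by simp)] with y hy using hy.differentiableAt (by simp)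
  obtain ⟨ε, hε, hsub⟩ := Metric.mem_nhds_iff.1 (inter_mem ht hdiff)
  refine ⟨2 * K + 1, by positivity, ε / 2, by positivity, fun x hx w hw => ?_⟩
  have hmem : ∀ v : Ed d, ‖v‖ ≤ ‖w‖ → x + v ∈ ball x₀ ε ∧ x - v ∈ ball x₀ ε := fun v hv => by
    simp only [mem_ball, dist_eq_norm] at hx ⊢
    constructor
    · calc ‖x + v - x₀‖ = ‖(x - x₀) + v‖ := by congr 1; abel
        _ ≤ ‖x - x₀‖ + ‖v‖ := norm_add_le _ _
        _ < ε := by linarith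
    · calc ‖x - v - x₀‖ = ‖(x - x₀) - v‖ := by congr 1; abel
        _ ≤ ‖x - x₀‖ + ‖v‖ := norm_sub_le _ _
        _ < ε := by linarith
  have hd : ∀ v ∈ closedBall (0 : Ed d) ‖w‖, HasFDerivWithinAt (secDiff Φ x)
      (fderiv ℝ Φ (x + v) - fderiv ℝ Φ (x - v)) (closedBall 0 ‖w‖) v := fun v hv => by
    obtain ⟨h1, h2⟩ := hmem v (by simpa using hv)
    have d1 : HasFDerivAt (fun v => Φ (x + v)) (fderiv ℝ Φ (x + v)) v := by
      simpa using! (hsub h1).2.hasFDerivAt.comp v ((hasFDerivAt_id v).const_add x)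
    have d2 : HasFDerivAt (fun v => Φ (x - v)) (-fderiv ℝ Φ (x - v)) v := by
      simpa using! (hsub h2).2.hasFDerivAt.comp v ((hasFDerivAt_id v).const_sub x)
    have := ((d1.add d2).sub_const (2 * Φ x)).hasFDerivWithinAt (s := closedBall 0 ‖w‖)
    rw [← sub_eq_add_neg] at this
    exact this
  have hb : ∀ v ∈ closedBall (0 : Ed d) ‖w‖,
      ‖fderiv ℝ Φ (x + v) - fderiv ℝ Φ (x - v)‖ ≤ 2 * K * ‖w‖ := fun v hv => by
    have hv' : ‖v‖ ≤ ‖w‖ := by simpa using hv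
    obtain ⟨h1, h2⟩ := hmem v hv'
    have := hK.norm_sub_le (hsub h1).1 (hsub h2).1
    refine this.trans ?_
    have e : x + v - (x - v) = (2 : ℝ) • v := by rw [two_smul]; abel
    rw [e, norm_smul, norm_ofNat]
    nlinarith [K.coe_nonneg]
  have := (convex_closedBall (0 : Ed d) ‖w‖).norm_image_sub_le_of_norm_hasFDerivWithin_le hd hb
    (x := 0) (y := w) (by simp) (by simp)
  rw [secDiff_zero, sub_zero, sub_zero, norm_eq_abs] at this
  nlinarith [sq_nonneg ‖w‖]

lemma integrable_indicator_ball_sq_mul (hd : 1 ≤ d) (η : ℝ) :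
    Integrable ((ball (0 : Ed d) η).indicator fun w => ‖w‖ ^ 2 * ‖w‖ ^ (-(d : ℝ) - 1)) := by
  have : Nonempty (Fin d) := ⟨⟨0, hd⟩⟩
  have h := integrable_fun_norm_addHaar (E := Ed d) volume
    (f := (Iio η).indicator fun r : ℝ => r ^ 2 * r ^ (-(d : ℝ) - 1))
  have e : (fun w : Ed d => (Iio η).indicator (fun r : ℝ => r ^ 2 * r ^ (-(d : ℝ) - 1)) ‖w‖)
      = (ball (0 : Ed d) η).indicator fun w => ‖w‖ ^ 2 * ‖w‖ ^ (-(d : ℝ) - 1) := by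
    ext w
    simp [indicator]
  rw [← e, h, finrank_euclideanSpace_fin]
  have h1 : IntegrableOn ((Iio η).indicator fun _ : ℝ => (1 : ℝ)) (Ioi 0) := by
    rw [IntegrableOn, integrable_indicator_iff measurableSet_Iio, IntegrableOn,
      Measure.restrict_restrict measurableSet_Iio]
    exact integrableOn_const (by rw [Iio_inter_Ioi]; simp)
  refine h1.congr_fun (fun r hr => ?_) measurableSet_Ioi
  have hr : 0 < r := hr
  by_cases hη : r < η
  · simp only [indicator, mem_Iio, hη, if_true, smul_eq_mul]
    rw [← rpow_natCast r (d - 1), ← rpow_natCast r 2, ← rpow_add hr, ← rpow_add hr,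
      Nat.cast_sub hd]
    rw [show ((d : ℝ) - (1 : ℕ) + (((2 : ℕ) : ℝ) + (-(d : ℝ) - 1))) = 0 by push_cast; ring,
      rpow_zero]
  · simp [indicator, hη]

lemma norm_rpow_le_weight (d : ℕ) {η : ℝ} (hη : 0 < η) : ∃ C > 0, ∀ w : Ed d, η ≤ ‖w‖ →
    ‖w‖ ^ (-(d : ℝ) - 1) ≤ C * (1 + ‖w‖) ^ (-(d : ℝ) - 1) := by
  refine ⟨(η / (1 + η)) ^ (-(d : ℝ) - 1), by positivity, fun w hw => ?_⟩
  rw [← mul_rpow (by positivity) (by positivity)]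
  refine rpow_le_rpow_of_nonpos (by positivity) ?_ (by have : (0 : ℝ) ≤ d := by positivity
                                                       linarith)
  rw [div_mul_eq_mul_div, div_le_iff₀ (by positivity)]
  nlinarith

lemma secDiff_locally_integrable (hd : 1 ≤ d) {Φ : Ed d → ℝ} (hm : Measurable Φ)
    (hint : Integrable (fun y : Ed d => |Φ y| * (1 + ‖y‖) ^ (-(d : ℝ) - 1)))
    {x₀ : Ed d} (h : ContDiffAt ℝ 2 Φ x₀) :
    ∃ C, ∀ᶠ x in 𝓝 x₀, Integrable (fun w => ‖w‖ ^ (-(d : ℝ) - 1) * |secDiff Φ x w|) ∧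
      ∫ w, ‖w‖ ^ (-(d : ℝ) - 1) * |secDiff Φ x w| ≤ C := by
  obtain ⟨M, hM, η, hη, hS⟩ := abs_secDiff_le h
  obtain ⟨B, hB, hw⟩ := norm_rpow_le_weight d hη
  set Ψ : Ed d → ℝ := fun y => |Φ y| * (1 + ‖y‖) ^ (-(d : ℝ) - 1) with hΨ
  set G : Ed d → ℝ :=
    (ball (0 : Ed d) η).indicator fun w => ‖w‖ ^ 2 * ‖w‖ ^ (-(d : ℝ) - 1) with hG
  have hG0 : ∀ w, 0 ≤ G w := fun w => indicator_nonneg (fun _ _ => by positivity) w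
  have hΨ0 : ∀ w, 0 ≤ Ψ w := fun w => by positivity
  set bd : ℝ → ℝ → Ed d → Ed d → ℝ := fun R A x w =>
    M * G w + B * R * (Ψ (x + w) + Ψ (x - w)) + 2 * B * A * (1 + ‖w‖) ^ (-(d : ℝ) - 1)
  set R : ℝ := (1 + (‖x₀‖ + 1)) ^ ((d : ℝ) + 1)
  set A : ℝ := |Φ x₀| + 1
  have hbound : ∀ x ∈ ball x₀ η, ‖x‖ ≤ ‖x₀‖ + 1 → |Φ x| ≤ A → ∀ w,
      ‖w‖ ^ (-(d : ℝ) - 1) * |secDiff Φ x w| ≤ bd R A x w := by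
    intro x hx hxR hxA w
    have hA : 0 ≤ A := by positivity
    have hP1 : (1 + ‖w‖) ^ (-(d : ℝ) - 1) ≤ R * (1 + ‖x + w‖) ^ (-(d : ℝ) - 1) := by
      have := weight_sub_le x (x + w)
      rw [sub_add_cancel_left, norm_neg] at this
      refine this.trans ?_
      simp only [R]
      gcongr
    have hP2 : (1 + ‖w‖) ^ (-(d : ℝ) - 1) ≤ R * (1 + ‖x - w‖) ^ (-(d : ℝ) - 1) := by
      have := weight_sub_le x (x - w)
      rw [sub_sub_cancel] at this
      refine this.trans ?_
      simp only [R]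
      gcongr
    have hR : 0 ≤ R := by positivity
    by_cases hwη : ‖w‖ < η
    · have h1 : G w = ‖w‖ ^ 2 * ‖w‖ ^ (-(d : ℝ) - 1) := indicator_of_mem (by simpa using hwη) _
      have h2 := mul_le_mul_of_nonneg_left (hS x hx w hwη)
        (show 0 ≤ ‖w‖ ^ (-(d : ℝ) - 1) by positivity)
      have h3 : 0 ≤ B * R * (Ψ (x + w) + Ψ (x - w)) :=
        mul_nonneg (by positivity) (add_nonneg (hΨ0 _) (hΨ0 _))
      have h4 : 0 ≤ 2 * B * A * (1 + ‖w‖) ^ (-(d : ℝ) - 1) := by positivity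
      simp only [bd]
      rw [h1]
      nlinarith
    · have h1 := hw w (not_lt.1 hwη)
      have h2 : |secDiff Φ x w| ≤ |Φ (x + w)| + |Φ (x - w)| + 2 * A := by
        have t1 := abs_sub (Φ (x + w) + Φ (x - w)) (2 * Φ x)
        have t2 := abs_add_le (Φ (x + w)) (Φ (x - w))
        rw [abs_mul, abs_two] at t1
        unfold secDiff
        linarith
      calc ‖w‖ ^ (-(d : ℝ) - 1) * |secDiff Φ x w|
          ≤ (B * (1 + ‖w‖) ^ (-(d : ℝ) - 1)) * (|Φ (x + w)| + |Φ (x - w)| + 2 * A) := by gcongr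
        _ = B * (|Φ (x + w)| * (1 + ‖w‖) ^ (-(d : ℝ) - 1) + |Φ (x - w)| *
              (1 + ‖w‖) ^ (-(d : ℝ) - 1)) + 2 * B * A * (1 + ‖w‖) ^ (-(d : ℝ) - 1) := by ring
        _ ≤ B * (|Φ (x + w)| * (R * (1 + ‖x + w‖) ^ (-(d : ℝ) - 1)) + |Φ (x - w)| *
              (R * (1 + ‖x - w‖) ^ (-(d : ℝ) - 1)))
              + 2 * B * A * (1 + ‖w‖) ^ (-(d : ℝ) - 1) := by gcongr
        _ = 0 + B * R * (Ψ (x + w) + Ψ (x - w)) + 2 * B * A * (1 + ‖w‖) ^ (-(d : ℝ) - 1) := by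
              simp only [hΨ]; ring
        _ ≤ bd R A x w := by
              simp only [bd]
              gcongr
              exact mul_nonneg hM.le (hG0 w)
  have hGi : Integrable G := integrable_indicator_ball_sq_mul hd η
  have hplus : ∀ x, Integrable fun w => Ψ (x + w) := fun x => hint.comp_add_left x
  have hminus : ∀ x, Integrable fun w => Ψ (x - w) := fun x => hint.comp_sub_left x
  have hbdi : ∀ x, Integrable (bd R A x) := fun x =>
    ((hGi.const_mul M).add (((hplus x).add (hminus x)).const_mul _)).add
      ((integrable_weight d).const_mul _)
  refine ⟨∫ w, bd R A 0 w, ?_⟩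
  have ev1 : ∀ᶠ x in 𝓝 x₀, ‖x‖ < ‖x₀‖ + 1 :=
    continuous_norm.continuousAt.eventually_lt continuousAt_const (by linarith)
  have ev2 : ∀ᶠ x in 𝓝 x₀, |Φ x| < A :=
    h.continuousAt.abs.eventually_lt continuousAt_const (by simp [A])
  filter_upwards [ball_mem_nhds x₀ hη, ev1, ev2] with x hx hxR hxA
  have hb := hbound x hx hxR.le hxA.le
  have hi : Integrable (fun w => ‖w‖ ^ (-(d : ℝ) - 1) * |secDiff Φ x w|) := by
    refine (hbdi x).mono' ?_ (Eventually.of_forall fun w => ?_)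
    · have := measurable_secDiff hm x
      exact Measurable.aestronglyMeasurable (by fun_prop)
    · rw [norm_of_nonneg (by positivity)]
      exact hb w
  refine ⟨hi, (integral_mono hi (hbdi x) hb).trans (le_of_eq ?_)⟩
  have split : ∀ x, ∫ w, bd R A x w = M * (∫ w, G w) + B * R * ((∫ w, Ψ w) + ∫ w, Ψ w)
      + 2 * B * A * ∫ w : Ed d, (1 + ‖w‖) ^ (-(d : ℝ) - 1) := fun x => by
    have j1 : Integrable fun w => B * R * (Ψ (x + w) + Ψ (x - w)) :=
      ((hplus x).add (hminus x)).const_mul _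
    have j2 : Integrable fun w => M * G w + B * R * (Ψ (x + w) + Ψ (x - w)) :=
      (hGi.const_mul M).add j1
    simp only [bd]
    rw [integral_add j2 ((integrable_weight d).const_mul _), integral_add (hGi.const_mul M) j1,
      integral_const_mul, integral_const_mul, integral_const_mul,
      integral_add (hplus x) (hminus x), integral_add_left_eq_self, integral_sub_left_eq_self]
  rw [split, split]

lemma exists_kernel_weight_bound (hd : 1 ≤ d) {t : ℝ} (ht : 0 < t) : ∃ C,
    (∀ w : Ed d, |poissonK d t w| ≤ C * (1 + ‖w‖) ^ (-(d : ℝ) - 1)) ∧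
    ∀ w : Ed d, |poissonKDeriv d t w| ≤ C * (1 + ‖w‖) ^ (-(d : ℝ) - 1) := by
  obtain ⟨C, -, h⟩ := exists_kernel_bound hd ht t 0
  exact ⟨C, fun w => by simpa [poissonK_neg] using (h t ⟨le_rfl, le_rfl⟩ 0 (by simp) w).1,
    fun w => by simpa [poissonKDeriv_neg] using (h t ⟨le_rfl, le_rfl⟩ 0 (by simp) w).2⟩

section
variable {Φ : Ed d → ℝ}

lemma integrable_poissonK_mul (hd : 1 ≤ d) (hm : Measurable Φ)
    (hint : Integrable (fun y : Ed d => |Φ y| * (1 + ‖y‖) ^ (-(d : ℝ) - 1)))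
    {t : ℝ} (ht : 0 < t) (x : Ed d) : Integrable fun y => poissonK d t (x - y) * Φ y := by
  obtain ⟨C, h, -⟩ := exists_kernel_weight_bound hd ht
  exact integrable_kernel_mul hm hint (continuous_poissonK ht).measurable h x

lemma integral_poissonK_mul_eq (hd : 1 ≤ d) (hm : Measurable Φ)
    (hint : Integrable (fun y : Ed d => |Φ y| * (1 + ‖y‖) ^ (-(d : ℝ) - 1)))
    {t : ℝ} (ht : 0 < t) (x : Ed d) :
    ∫ y, poissonK d t (x - y) * Φ y = (∫ w, poissonK d t w * secDiff Φ x w) / 2 + Φ x := by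
  rw [integral_kernel_mul_eq (poissonK_neg t) (integrable_poissonK hd ht)
    (integrable_poissonK_mul hd hm hint ht x), integral_poissonK ht, mul_one]

lemma integral_poissonKDeriv_mul_eq (hd : 1 ≤ d) (hm : Measurable Φ)
    (hint : Integrable (fun y : Ed d => |Φ y| * (1 + ‖y‖) ^ (-(d : ℝ) - 1)))
    {t : ℝ} (ht : 0 < t) (x : Ed d) :
    ∫ y, poissonKDeriv d t (x - y) * Φ y = (∫ w, poissonKDeriv d t w * secDiff Φ x w) / 2 := by
  obtain ⟨C, -, h⟩ := exists_kernel_weight_bound hd ht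
  rw [integral_kernel_mul_eq (poissonKDeriv_neg t) (integrable_poissonKDeriv hd ht)
    (integrable_kernel_mul hm hint (continuous_poissonKDeriv ht).measurable h x),
    integral_poissonKDeriv hd ht, mul_zero, add_zero]

lemma norm_poissonK_mul_secDiff_le {t : ℝ} (ht : 0 < t) (x w : Ed d) :
    ‖poissonK d t w * secDiff Φ x w‖
      ≤ poissonConst d * t * (‖w‖ ^ (-(d : ℝ) - 1) * |secDiff Φ x w|) := by
  rcases eq_or_ne w 0 with rfl | hw
  · simp [secDiff_zero]
  have hc := poissonConst_pos d
  rw [norm_mul, norm_of_nonneg (poissonK_nonneg ht.le w), norm_eq_abs, poissonK_eq, ← mul_assoc]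
  gcongr
  exact rpow_sq_add_le_norm_rpow w hw t

lemma norm_poissonKDeriv_mul_secDiff_le (hd : 1 ≤ d) {t : ℝ} (ht : 0 < t) (x w : Ed d) :
    ‖poissonKDeriv d t w * secDiff Φ x w‖
      ≤ poissonConst d * d * (‖w‖ ^ (-(d : ℝ) - 1) * |secDiff Φ x w|) := by
  rcases eq_or_ne w 0 with rfl | hw
  · simp [secDiff_zero]
  have hc := poissonConst_pos d
  rw [norm_mul, norm_eq_abs, norm_eq_abs, ← mul_assoc]
  gcongr
  refine (abs_poissonKDeriv_le hd ht w).trans ?_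
  gcongr
  exact rpow_sq_add_le_norm_rpow w hw t

lemma abs_poissonIntegral_sub_le (hd : 1 ≤ d) (hm : Measurable Φ)
    (hint : Integrable (fun y : Ed d => |Φ y| * (1 + ‖y‖) ^ (-(d : ℝ) - 1)))
    {t : ℝ} (ht : 0 < t) {x : Ed d}
    (hx : Integrable (fun w => ‖w‖ ^ (-(d : ℝ) - 1) * |secDiff Φ x w|)) :
    |(∫ y, poissonK d t (x - y) * Φ y) - Φ x|
      ≤ poissonConst d * t * ∫ w, ‖w‖ ^ (-(d : ℝ) - 1) * |secDiff Φ x w| := by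
  rw [integral_poissonK_mul_eq hd hm hint ht, add_sub_cancel_right, abs_div, abs_two,
    ← integral_const_mul]
  have h := norm_integral_le_of_norm_le (hx.const_mul (poissonConst d * t))
    (Eventually.of_forall (norm_poissonK_mul_secDiff_le (Φ := Φ) ht x))
  rw [norm_eq_abs] at h
  linarith [abs_nonneg (∫ w, poissonK d t w * secDiff Φ x w)]

lemma abs_poissonDerivIntegral_le (hd : 1 ≤ d) (hm : Measurable Φ)
    (hint : Integrable (fun y : Ed d => |Φ y| * (1 + ‖y‖) ^ (-(d : ℝ) - 1)))
    {t : ℝ} (ht : 0 < t) {x : Ed d}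
    (hx : Integrable (fun w => ‖w‖ ^ (-(d : ℝ) - 1) * |secDiff Φ x w|)) :
    |∫ y, poissonKDeriv d t (x - y) * Φ y|
      ≤ poissonConst d * d * ∫ w, ‖w‖ ^ (-(d : ℝ) - 1) * |secDiff Φ x w| := by
  rw [integral_poissonKDeriv_mul_eq hd hm hint ht, abs_div, abs_two, ← integral_const_mul]
  have h := norm_integral_le_of_norm_le (hx.const_mul (poissonConst d * d))
    (Eventually.of_forall (norm_poissonKDeriv_mul_secDiff_le (Φ := Φ) hd ht x))
  rw [norm_eq_abs] at h
  linarith [abs_nonneg (∫ w, poissonKDeriv d t w * secDiff Φ x w)]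

lemma fracConst_one_pos (d : ℕ) : 0 < fracConst d 1 := by
  unfold fracConst
  have h1 : 0 < Real.Gamma (((d : ℝ) + 1) / 2) := Real.Gamma_pos_of_pos (by positivity)
  have h2 : 0 < Real.Gamma (1 - 1 / 2) := Real.Gamma_pos_of_pos (by norm_num)
  positivity

/-- The principal value defining `Δ^{1/2}` is an absolutely convergent integral of second
differences. -/
lemma integral_secDiff_eq_zero (hm : Measurable Φ)
    (hint : Integrable (fun y : Ed d => |Φ y| * (1 + ‖y‖) ^ (-(d : ℝ) - 1))) {x : Ed d}
    (hx : Integrable (fun w => ‖w‖ ^ (-(d : ℝ) - 1) * |secDiff Φ x w|))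
    (hfrac : fracLapAt d 1 Φ x 0) :
    ∫ w, ‖w‖ ^ (-(d : ℝ) - 1) * secDiff Φ x w = 0 := by
  set κ : ℝ → Ed d → ℝ := fun ε => {w | ε < ‖w‖}.indicator fun w => ‖w‖ ^ (-(d : ℝ) - 1) with hκ
  have hmset : ∀ ε : ℝ, MeasurableSet {w : Ed d | ε < ‖w‖} := fun ε =>
    measurableSet_lt measurable_const measurable_norm
  have hκm : ∀ ε, Measurable (κ ε) := fun ε => Measurable.indicator (by fun_prop) (hmset ε)
  have htrunc : ∀ ε : ℝ, 0 < ε →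
      ∫ y in {y : Ed d | ε < ‖y - x‖}, (Φ y - Φ x) * ‖y - x‖ ^ (-(d : ℝ) - 1)
        = (∫ w, κ ε w * secDiff Φ x w) / 2 := by
    intro ε hε
    obtain ⟨C, hC, hb⟩ := norm_rpow_le_weight d hε
    have hb' : ∀ w : Ed d, |κ ε w| ≤ C * (1 + ‖w‖) ^ (-(d : ℝ) - 1) := fun w => by
      by_cases hw : ε < ‖w‖
      · rw [hκ]
        simp only [indicator, mem_ofPred_eq, hw, if_true]
        rw [abs_of_nonneg (by positivity)]
        exact hb w hw.le
      · have : κ ε w = 0 := by simp [hκ, hw]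
        rw [this, abs_zero]
        positivity
    have heven : ∀ w, κ ε (-w) = κ ε w := fun w => by simp [hκ, indicator]
    have i1 := integrable_of_abs_le_weight (hκm ε) hb'
    have i2 := integrable_kernel_mul hm hint (hκm ε) hb' x
    have e := integral_kernel_mul_eq heven i1 i2
    have i3 : Integrable fun y => κ ε (x - y) := i1.comp_sub_left x
    have e3 : ∫ y, κ ε (x - y) = ∫ w, κ ε w := integral_sub_left_eq_self (κ ε) volume x
    have hset : MeasurableSet {y : Ed d | ε < ‖y - x‖} :=
      measurableSet_lt measurable_const (by fun_prop)
    rw [← integral_indicator hset]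
    calc _ = ∫ y, (κ ε (x - y) * Φ y - Φ x * κ ε (x - y)) := by
          congr 1 with y
          simp only [hκ, indicator, mem_ofPred_eq, norm_sub_rev x y]
          split_ifs <;> ring
      _ = _ := by
          rw [integral_sub i2 (i3.const_mul _), integral_const_mul, e3, e]
          ring
  have hlim : Tendsto (fun ε => ∫ w, κ ε w * secDiff Φ x w) (𝓝[>] 0)
      (𝓝 (∫ w, ‖w‖ ^ (-(d : ℝ) - 1) * secDiff Φ x w)) := by
    have hSm := measurable_secDiff hm x
    refine tendsto_integral_filter_of_dominated_convergence _
      (Eventually.of_forall fun ε => ((hκm ε).mul hSm).aestronglyMeasurable)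
      (Eventually.of_forall fun ε => Eventually.of_forall fun w => ?_) hx
      (Eventually.of_forall fun w => ?_)
    · rw [norm_mul, norm_eq_abs (secDiff Φ x w)]
      gcongr
      refine (norm_indicator_le_norm_self _ _).trans (le_of_eq ?_)
      exact norm_of_nonneg (by positivity)
    · rcases eq_or_ne w 0 with rfl | hw
      · simp [secDiff_zero]
      · refine tendsto_const_nhds.congr' ?_
        have : ∀ᶠ ε : ℝ in 𝓝[>] 0, ε < ‖w‖ :=
          nhdsWithin_le_nhds (gt_mem_nhds (norm_pos_iff.2 hw))
        filter_upwards [this] with ε hε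
        simp [hκ, hε]
  have h2 : Tendsto (fun ε => fracConst d 1 * ((∫ w, κ ε w * secDiff Φ x w) / 2)) (𝓝[>] 0)
      (𝓝 0) := by
    refine hfrac.congr' ?_
    filter_upwards [self_mem_nhdsWithin] with ε hε
    rw [htrunc ε hε]
  have h3 := tendsto_nhds_unique h2 ((hlim.div_const 2).const_mul (fracConst d 1))
  have := (fracConst_one_pos d).ne'
  simpa [this] using h3.symm

/-- The normal derivative of the Poisson extension vanishes where `Δ^{1/2} Φ` does. -/
lemma tendsto_poissonDerivIntegral (hd : 1 ≤ d) (hm : Measurable Φ)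
    (hint : Integrable (fun y : Ed d => |Φ y| * (1 + ‖y‖) ^ (-(d : ℝ) - 1))) {x : Ed d}
    (hx : Integrable (fun w => ‖w‖ ^ (-(d : ℝ) - 1) * |secDiff Φ x w|))
    (hfrac : fracLapAt d 1 Φ x 0) :
    Tendsto (fun t => ∫ y, poissonKDeriv d t (x - y) * Φ y) (𝓝[>] 0) (𝓝 0) := by
  have hlim : Tendsto (fun t => ∫ w, poissonKDeriv d t w * secDiff Φ x w) (𝓝[>] 0)
      (𝓝 (∫ w, poissonConst d * (‖w‖ ^ (-(d : ℝ) - 1) * secDiff Φ x w))) := by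
    have hSm := measurable_secDiff hm x
    refine tendsto_integral_filter_of_dominated_convergence
      (fun w => poissonConst d * d * (‖w‖ ^ (-(d : ℝ) - 1) * |secDiff Φ x w|)) ?_ ?_
      (hx.const_mul _) (Eventually.of_forall fun w => ?_)
    · filter_upwards [self_mem_nhdsWithin] with t ht
      exact ((continuous_poissonKDeriv ht).measurable.mul hSm).aestronglyMeasurable
    · filter_upwards [self_mem_nhdsWithin] with t ht
      exact Eventually.of_forall (norm_poissonKDeriv_mul_secDiff_le hd ht x)
    · rcases eq_or_ne w 0 with rfl | hw
      · simp [secDiff_zero]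
      have hw' : 0 < ‖w‖ := norm_pos_iff.2 hw
      have h0 : poissonKDeriv d 0 w = poissonConst d * ‖w‖ ^ (-(d : ℝ) - 1) := by
        unfold poissonKDeriv
        simp only [ne_eq, OfNat.ofNat_ne_zero, not_false_eq_true, zero_pow, mul_zero, sub_zero,
          add_zero]
        rw [mul_assoc, ← rpow_natCast ‖w‖ 2, ← rpow_mul hw'.le, ← rpow_add hw']
        congr 2; push_cast; ring
      rw [← mul_assoc, ← h0]
      refine Tendsto.mul_const _ (Tendsto.mono_left ?_ nhdsWithin_le_nhds)
      have : ContinuousAt (fun t => poissonKDeriv d t w) 0 := by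
        unfold poissonKDeriv
        refine ContinuousAt.mul (by fun_prop) (ContinuousAt.rpow_const (by fun_prop) (Or.inl ?_))
        simp [hw]
      exact this
  rw [integral_const_mul, integral_secDiff_eq_zero hm hint hx hfrac, mul_zero] at hlim
  have := hlim.div_const 2
  rw [zero_div] at this
  refine this.congr' ?_
  filter_upwards [self_mem_nhdsWithin] with t ht
  rw [integral_poissonKDeriv_mul_eq hd hm hint ht]

lemma continuousAt_poissonK_prod {t : ℝ} (ht : 0 < t) (x : Ed d) :
    ContinuousAt (fun p : Ed d × ℝ => poissonK d p.2 p.1) (x, t) := by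
  unfold poissonK
  refine ContinuousAt.mul (by fun_prop) (ContinuousAt.rpow_const (by fun_prop) (Or.inl ?_))
  positivity

lemma continuousAt_poissonIntegral (hd : 1 ≤ d) (hm : Measurable Φ)
    (hint : Integrable (fun y : Ed d => |Φ y| * (1 + ‖y‖) ^ (-(d : ℝ) - 1)))
    {t : ℝ} (ht : 0 < t) (x : Ed d) :
    ContinuousAt (fun p : Ed d × ℝ => ∫ y, poissonK d p.2 (p.1 - y) * Φ y) (x, t) := by
  obtain ⟨C, -, h⟩ := exists_kernel_bound hd (half_pos ht) (2 * t) (‖x‖ + 1)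
  have ev1 : ∀ᶠ p : Ed d × ℝ in 𝓝 (x, t), ‖p.1‖ < ‖x‖ + 1 :=
    ContinuousAt.eventually_lt (by fun_prop) continuousAt_const (by simp)
  have ev2 : ∀ᶠ p : Ed d × ℝ in 𝓝 (x, t), p.2 ∈ Ioo (t / 2) (2 * t) :=
    continuousAt_snd.eventually (isOpen_Ioo.mem_nhds ⟨by simp; linarith, by simp; linarith⟩)
  refine continuousAt_of_dominated
    (bound := fun y => C * (|Φ y| * (1 + ‖y‖) ^ (-(d : ℝ) - 1))) ?_ ?_ (hint.const_mul C)
    (Eventually.of_forall fun y => ?_)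
  · filter_upwards [ev2] with p hp
    exact (integrable_poissonK_mul hd hm hint (by linarith [hp.1]) p.1).aestronglyMeasurable
  · filter_upwards [ev1, ev2] with p hp1 hp2
    refine Eventually.of_forall fun y => ?_
    rw [norm_mul, norm_eq_abs, norm_eq_abs]
    calc _ ≤ C * (1 + ‖y‖) ^ (-(d : ℝ) - 1) * |Φ y| := by
          gcongr
          exact (h p.2 ⟨hp2.1.le, hp2.2.le⟩ p.1 hp1.le y).1
      _ = _ := by ring
  · refine ContinuousAt.mul ?_ continuousAt_const
    exact ContinuousAt.comp (f := fun p : Ed d × ℝ => (p.1 - y, p.2)) (x := (x, t))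
      (g := fun p : Ed d × ℝ => poissonK d p.2 p.1)
      (continuousAt_poissonK_prod ht (x - y)) (by fun_prop)

/-- The Poisson extension is continuous on its domain of harmonicity. -/
lemma continuousOn_poissonExtension (hd : 1 ≤ d) {E : Set (Ed d)} (hE : IsOpen E)
    (hm : Measurable Φ)
    (hint : Integrable (fun y : Ed d => |Φ y| * (1 + ‖y‖) ^ (-(d : ℝ) - 1)))
    (hC2 : ContDiffOn ℝ 2 Φ E) {U : Ed d × ℝ → ℝ}
    (hU : ∀ p : Ed d × ℝ,
      U p = if p.2 = 0 then Φ p.1 else ∫ y : Ed d, poissonK d |p.2| (p.1 - y) * Φ y) :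
    ContinuousOn U {p : Ed d × ℝ | p.2 ≠ 0 ∨ p.1 ∈ E} := by
  rintro ⟨x, t⟩ hp
  refine ContinuousAt.continuousWithinAt ?_
  rcases eq_or_ne t 0 with rfl | ht
  · have hx : x ∈ E := hp.resolve_left (by simp)
    have hΦ := hC2.contDiffAt (hE.mem_nhds hx)
    obtain ⟨C, hC⟩ := secDiff_locally_integrable hd hm hint hΦ
    have hbound : ∀ᶠ p : Ed d × ℝ in 𝓝 (x, 0), ‖U p - Φ p.1‖ ≤ poissonConst d * |p.2| * C := by
      filter_upwards [continuousAt_fst.eventually hC] with p hpC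
      have hI : 0 ≤ ∫ w, ‖w‖ ^ (-(d : ℝ) - 1) * |secDiff Φ p.1 w| :=
        integral_nonneg fun w => by positivity
      rw [hU p]
      split_ifs with h0
      · simp [h0]
      · refine (abs_poissonIntegral_sub_le hd hm hint (abs_pos.2 h0) hpC.1).trans ?_
        have := poissonConst_pos d
        gcongr
        exact hpC.2
    have h1 : Tendsto (fun p : Ed d × ℝ => U p - Φ p.1) (𝓝 (x, 0)) (𝓝 0) := by
      refine squeeze_zero_norm' hbound ?_
      have : ContinuousAt (fun p : Ed d × ℝ => poissonConst d * |p.2| * C) (x, 0) := by fun_prop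
      simpa [ContinuousAt] using this
    have h2 : Tendsto (fun p : Ed d × ℝ => Φ p.1) (𝓝 (x, 0)) (𝓝 (Φ x)) :=
      hΦ.continuousAt.tendsto.comp continuousAt_fst
    have h3 := h1.add h2
    have h4 : U (x, 0) = Φ x := by simp [hU]
    simpa [ContinuousAt, h4] using h3
  · have h1 : ContinuousAt (fun p : Ed d × ℝ => ∫ y, poissonK d |p.2| (p.1 - y) * Φ y) (x, t) :=
      ContinuousAt.comp (f := fun p : Ed d × ℝ => (p.1, |p.2|)) (x := (x, t))
        (g := fun p : Ed d × ℝ => ∫ y, poissonK d p.2 (p.1 - y) * Φ y)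
        (continuousAt_poissonIntegral hd hm hint (abs_pos.2 ht) x) (by fun_prop)
    refine h1.congr ?_
    have : ∀ᶠ p : Ed d × ℝ in 𝓝 (x, t), p.2 ≠ 0 := continuousAt_snd.eventually_ne ht
    filter_upwards [this] with p hp
    rw [hU p, if_neg hp]

lemma exists_bound_on_compact (hd : 1 ≤ d) {E : Set (Ed d)} (hE : IsOpen E) (hm : Measurable Φ)
    (hint : Integrable (fun y : Ed d => |Φ y| * (1 + ‖y‖) ^ (-(d : ℝ) - 1)))
    (hC2 : ContDiffOn ℝ 2 Φ E) {L : Set (Ed d)} (hL : IsCompact L) (hLE : L ⊆ E) :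
    ∃ C, ∀ x ∈ L, Integrable (fun w => ‖w‖ ^ (-(d : ℝ) - 1) * |secDiff Φ x w|) ∧
      ∫ w, ‖w‖ ^ (-(d : ℝ) - 1) * |secDiff Φ x w| ≤ C := by
  refine hL.induction_on (p := fun s => ∃ C, ∀ x ∈ s,
    Integrable (fun w => ‖w‖ ^ (-(d : ℝ) - 1) * |secDiff Φ x w|) ∧
      ∫ w, ‖w‖ ^ (-(d : ℝ) - 1) * |secDiff Φ x w| ≤ C) ⟨0, by simp⟩ ?_ ?_ ?_
  · rintro s t hst ⟨C, hC⟩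
    exact ⟨C, fun x hx => hC x (hst hx)⟩
  · rintro s t ⟨C, hC⟩ ⟨C', hC'⟩
    refine ⟨max C C', fun x hx => ?_⟩
    rcases hx with hx | hx
    · exact ⟨(hC x hx).1, (hC x hx).2.trans (le_max_left _ _)⟩
    · exact ⟨(hC' x hx).1, (hC' x hx).2.trans (le_max_right _ _)⟩
  · intro x hx
    obtain ⟨C, hC⟩ := secDiff_locally_integrable hd hm hint
      (hC2.contDiffAt (hE.mem_nhds (hLE hx)))
    exact ⟨_, mem_nhdsWithin_of_mem_nhds hC, C, fun y hy => hy⟩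

end

/-- Green's identity on a half-line. -/
lemma integral_Ioi_green {h h₁ h₂ f f₁ f₂ : ℝ → ℝ} {δ R : ℝ} (hδ : 0 < δ)
    (hh : ∀ s, 0 < s → HasDerivAt h (h₁ s) s) (hh₁ : ∀ s, 0 < s → HasDerivAt h₁ (h₂ s) s)
    (hf : ∀ t, HasDerivAt f (f₁ t) t) (hf₁ : ∀ t, HasDerivAt f₁ (f₂ t) t)
    (hR : ∀ t, R < |t| → f t = 0 ∧ f₁ t = 0)
    (hi : Integrable fun t => h (|t| + δ) * f₂ t - h₂ (|t| + δ) * f t) :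
    ∫ t in Ioi 0, (h (|t| + δ) * f₂ t - h₂ (|t| + δ) * f t) = h₁ δ * f 0 - h δ * f₁ 0 := by
  have hshift : ∀ {k k' : ℝ → ℝ}, (∀ s, 0 < s → HasDerivAt k (k' s) s) → ∀ t, 0 ≤ t →
      HasDerivAt (fun t => k (t + δ)) (k' (t + δ)) t := fun hk t ht => by
    simpa using (hk (t + δ) (by linarith)).comp_add_const t δ
  have hF : ∀ t, 0 ≤ t → HasDerivAt (fun t => h (t + δ) * f₁ t - h₁ (t + δ) * f t)
      (h (|t| + δ) * f₂ t - h₂ (|t| + δ) * f t) t := fun t ht => by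
    have := ((hshift hh t ht).fun_mul (hf₁ t)).fun_sub ((hshift hh₁ t ht).fun_mul (hf t))
    refine this.congr_deriv ?_
    rw [abs_of_nonneg ht]
    ring
  have hlim : Tendsto (fun t => h (t + δ) * f₁ t - h₁ (t + δ) * f t) atTop (𝓝 0) := by
    refine tendsto_const_nhds.congr' ?_
    filter_upwards [eventually_gt_atTop R] with t ht
    obtain ⟨h1, h2⟩ := hR t (ht.trans_le (le_abs_self t))
    simp [h1, h2]
  rw [integral_Ioi_of_hasDerivAt_of_tendsto (hF 0 le_rfl).continuousAt.continuousWithinAt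
    (fun t ht => hF t (le_of_lt ht)) hi.integrableOn hlim]
  simp

/-- Green's identity on the line for a function of `|t| + δ`. -/
lemma integral_abs_green {h h₁ h₂ f f₁ f₂ : ℝ → ℝ} {δ R : ℝ} (hδ : 0 < δ)
    (hh : ∀ s, 0 < s → HasDerivAt h (h₁ s) s) (hh₁ : ∀ s, 0 < s → HasDerivAt h₁ (h₂ s) s)
    (hf : ∀ t, HasDerivAt f (f₁ t) t) (hf₁ : ∀ t, HasDerivAt f₁ (f₂ t) t)
    (hR : ∀ t, R < |t| → f t = 0 ∧ f₁ t = 0)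
    (hi : Integrable fun t => h (|t| + δ) * f₂ t - h₂ (|t| + δ) * f t) :
    ∫ t, (h (|t| + δ) * f₂ t - h₂ (|t| + δ) * f t) = 2 * (h₁ δ * f 0) := by
  have e1 := integral_Ioi_green hδ hh hh₁ hf hf₁ hR hi
  have e2 := integral_Ioi_green (f := fun t => f (-t)) (f₁ := fun t => -f₁ (-t))
    (f₂ := fun t => f₂ (-t)) (R := R) hδ hh hh₁
    (fun t => by simpa using! (hf (-t)).scomp t (hasDerivAt_neg t))
    (fun t => by simpa using! ((hf₁ (-t)).scomp t (hasDerivAt_neg t)).neg)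
    (fun t ht => by simpa using hR (-t) (by simpa using ht)) (by simpa using hi.comp_neg)
  have e3 := integral_comp_neg_Ioi (0 : ℝ) fun t => h (|t| + δ) * f₂ t - h₂ (|t| + δ) * f t
  simp only [abs_neg, neg_zero] at e2 e3
  rw [← intervalIntegral.integral_Iic_add_Ioi hi.integrableOn hi.integrableOn (b := 0), e1, ← e3,
    e2]
  ring

lemma integral_lineDeriv_eq_zero {F F' : Ed d → ℝ} {e : Ed d}
    (hF : ∀ x, HasLineDerivAt ℝ F (F' x) x e) (hi : Integrable F) (hi' : Integrable F') :
    ∫ x, F' x = 0 := by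
  have h := integral_bilinear_hasLineDerivAt_right_eq_neg_left_of_integrable
    (μ := (volume : Measure (Ed d))) (f := fun _ => (1 : ℝ)) (f' := fun _ => (0 : ℝ))
    (g := F) (g' := F') (v := e) (B := ContinuousLinearMap.mul ℝ ℝ)
    (by simp) (by simpa using hi') (by simpa using hi)
    (fun x _ => by simpa [HasLineDerivAt] using hasDerivAt_const (0 : ℝ) (1 : ℝ))
    (fun x _ => hF x)
  simpa using h

/-- The second vertical derivative of the Poisson kernel. -/
noncomputable def poissonKDeriv₂ (d : ℕ) (t : ℝ) (x : Ed d) : ℝ :=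
  poissonConst d * (-(2 * d * t)) * (‖x‖ ^ 2 + t ^ 2) ^ (-((d : ℝ) + 1) / 2 - 1) +
    poissonConst d * (‖x‖ ^ 2 - d * t ^ 2) *
      (2 * t * (-((d : ℝ) + 1) / 2 - 1) * (‖x‖ ^ 2 + t ^ 2) ^ (-((d : ℝ) + 1) / 2 - 1 - 1))

/-- The first horizontal partial derivatives of the Poisson kernel. -/
noncomputable def poissonKPartial (i : Fin d) (t : ℝ) (x : Ed d) : ℝ :=
  poissonConst d * t *
    (2 * x i * (-((d : ℝ) + 1) / 2) * (‖x‖ ^ 2 + t ^ 2) ^ (-((d : ℝ) + 1) / 2 - 1))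

/-- The pure second horizontal partial derivatives of the Poisson kernel. -/
noncomputable def poissonKPartial₂ (i : Fin d) (t : ℝ) (x : Ed d) : ℝ :=
  poissonConst d * t * (2 * (-((d : ℝ) + 1) / 2) * (‖x‖ ^ 2 + t ^ 2) ^ (-((d : ℝ) + 1) / 2 - 1) +
    2 * x i * (-((d : ℝ) + 1) / 2) * (2 * x i * (-((d : ℝ) + 1) / 2 - 1) *
      (‖x‖ ^ 2 + t ^ 2) ^ (-((d : ℝ) + 1) / 2 - 1 - 1)))

lemma hasDerivAt_poissonKDeriv {t : ℝ} (ht : 0 < t) (x : Ed d) :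
    HasDerivAt (fun t => poissonKDeriv d t x) (poissonKDeriv₂ d t x) t := by
  have h1 : HasDerivAt (fun t : ℝ => poissonConst d * (‖x‖ ^ 2 - d * t ^ 2))
      (poissonConst d * (-(2 * d * t))) t := by
    refine ((((hasDerivAt_pow 2 t).const_mul (d : ℝ)).const_sub (‖x‖ ^ 2)).const_mul
      (poissonConst d)).congr_deriv ?_
    push_cast
    ring
  exact h1.fun_mul (hasDerivAt_rpow_sq_add ht x (-((d : ℝ) + 1) / 2 - 1))

lemma hasLineDerivAt_rpow_sq_add {t : ℝ} (ht : 0 < t) (x : Ed d) (i : Fin d) (p : ℝ) :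
    HasLineDerivAt ℝ (fun x : Ed d => (‖x‖ ^ 2 + t ^ 2) ^ p)
      (2 * x i * p * (‖x‖ ^ 2 + t ^ 2) ^ (p - 1)) x (EuclideanSpace.single i 1) := by
  have h0 := (hasStrictFDerivAt_norm_sq x).hasFDerivAt.hasLineDerivAt (EuclideanSpace.single i 1)
  have h1 : HasDerivAt (fun r : ℝ => ‖x + r • EuclideanSpace.single i (1 : ℝ)‖ ^ 2) (2 * x i) 0 := by
    simpa [HasLineDerivAt, EuclideanSpace.inner_single_right] using h0
  have h2 := (h1.add_const (t ^ 2)).rpow_const (p := p) (Or.inl (by positivity))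
  simpa [HasLineDerivAt] using h2

lemma hasLineDerivAt_poissonK {t : ℝ} (ht : 0 < t) (x : Ed d) (i : Fin d) :
    HasLineDerivAt ℝ (poissonK d t) (poissonKPartial i t x) x (EuclideanSpace.single i 1) :=
  HasDerivAt.const_mul (poissonConst d * t)
    (hasLineDerivAt_rpow_sq_add ht x i (-((d : ℝ) + 1) / 2))

lemma hasLineDerivAt_poissonKPartial {t : ℝ} (ht : 0 < t) (x : Ed d) (i : Fin d) :
    HasLineDerivAt ℝ (poissonKPartial i t) (poissonKPartial₂ i t x) x
      (EuclideanSpace.single i 1) := by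
  have h1 : HasDerivAt (fun r : ℝ => 2 * (x + r • EuclideanSpace.single i (1 : ℝ)) i *
      (-((d : ℝ) + 1) / 2)) (2 * (-((d : ℝ) + 1) / 2)) 0 := by
    have : HasDerivAt (fun r : ℝ => x i + r) 1 0 := (hasDerivAt_id 0).const_add (x i)
    simpa using (this.const_mul 2).mul_const (-((d : ℝ) + 1) / 2)
  have h2 := (h1.fun_mul (hasLineDerivAt_rpow_sq_add ht x i (-((d : ℝ) + 1) / 2 - 1))).const_mul
    (poissonConst d * t)
  simpa [HasLineDerivAt, poissonKPartial, poissonKPartial₂] using h2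

/-- The Poisson kernel is harmonic. -/
lemma sum_poissonKPartial₂_add {t : ℝ} (ht : 0 < t) (x : Ed d) :
    (∑ i, poissonKPartial₂ i t x) + poissonKDeriv₂ d t x = 0 := by
  have hs : ∑ i : Fin d, (x i) ^ 2 = ‖x‖ ^ 2 := (EuclideanSpace.real_norm_sq_eq x).symm
  have e : ∀ i : Fin d, poissonKPartial₂ i t x =
      poissonConst d * t * (2 * (-((d : ℝ) + 1) / 2) *
        (‖x‖ ^ 2 + t ^ 2) ^ (-((d : ℝ) + 1) / 2 - 1)) +
      poissonConst d * t * (4 * (-((d : ℝ) + 1) / 2) * (-((d : ℝ) + 1) / 2 - 1) *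
        (‖x‖ ^ 2 + t ^ 2) ^ (-((d : ℝ) + 1) / 2 - 1 - 1)) * (x i) ^ 2 := fun i => by
    unfold poissonKPartial₂; ring
  simp only [e]
  rw [Finset.sum_add_distrib, Finset.sum_const, Finset.card_univ, Fintype.card_fin, nsmul_eq_mul,
    ← Finset.mul_sum, hs, poissonKDeriv₂,
    rpow_sub_one_mul (s := ‖x‖ ^ 2 + t ^ 2) (by positivity) (-((d : ℝ) + 1) / 2 - 1)]
  ring

lemma contDiff_fderiv_apply {ζ : Ed d × ℝ → ℝ} (hζ : ContDiff ℝ ∞ ζ) (v : Ed d × ℝ) :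
    ContDiff ℝ ∞ fun q => fderiv ℝ ζ q v :=
  (hζ.fderiv_right (m := ∞) le_rfl).clm_apply contDiff_const

lemma hasLineDerivAt_slice {f : Ed d × ℝ → ℝ} (hf : ContDiff ℝ ∞ f) (x e : Ed d) (t : ℝ) :
    HasLineDerivAt ℝ (fun x => f (x, t)) (fderiv ℝ f (x, t) (e, 0)) x e := by
  have h := ((hf.differentiable (by simp)) (x, t)).hasFDerivAt.hasLineDerivAt (e, 0)
  simpa [HasLineDerivAt] using h

lemma hasDerivAt_slice {f : Ed d × ℝ → ℝ} (hf : ContDiff ℝ ∞ f) (x : Ed d) (t : ℝ) :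
    HasDerivAt (fun t => f (x, t)) (fderiv ℝ f (x, t) (0, 1)) t :=
  ((hf.differentiable (by simp)) (x, t)).hasFDerivAt.comp_hasDerivAt t
    ((hasDerivAt_const t x).prodMk (hasDerivAt_id t))

lemma hasLineDerivAt_sub_right {f : Ed d → ℝ} {x z e : Ed d} {f' : ℝ}
    (hf : HasLineDerivAt ℝ f f' (x - z) e) :
    HasLineDerivAt ℝ (fun x => f (x - z)) f' x e := by
  simpa only [HasLineDerivAt, add_sub_right_comm] using hf

lemma continuous_rpow_shift {δ : ℝ} (hδ : 0 < δ) (z : Ed d) (p : ℝ) :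
    Continuous fun q : Ed d × ℝ => (‖q.1 - z‖ ^ 2 + (|q.2| + δ) ^ 2) ^ p :=
  Continuous.rpow_const (by fun_prop) fun q => Or.inl (by positivity)

lemma integrable_shift_sub {k k' f f' : Ed d × ℝ → ℝ} (hk : Continuous k) (hk' : Continuous k')
    (hf : Continuous f) (hf' : Continuous f') (hc : HasCompactSupport f)
    (hc' : HasCompactSupport f') : Integrable fun q => k q * f q - k' q * f' q :=
  ((hk.mul hf).integrable_of_hasCompactSupport hc.mul_left).sub
    ((hk'.mul hf').integrable_of_hasCompactSupport hc'.mul_left)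

/-- Green's identity for the Poisson kernel with pole below the hyperplane. -/
lemma integral_poissonK_mul_lapProd {ζ : Ed d × ℝ → ℝ} (hζ : ContDiff ℝ ∞ ζ)
    (hc : HasCompactSupport ζ) {δ : ℝ} (hδ : 0 < δ) (z : Ed d) :
    ∫ q : Ed d × ℝ, poissonK d (|q.2| + δ) (q.1 - z) * lapProd d ζ q =
      2 * ∫ x, poissonKDeriv d δ (x - z) * ζ (x, 0) := by
  have hpos : ∀ t : ℝ, 0 < |t| + δ := fun t => by positivity
  have hcr := continuous_rpow_shift (d := d) hδ z
  have cK : Continuous fun q : Ed d × ℝ => poissonK d (|q.2| + δ) (q.1 - z) := by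
    unfold poissonK; fun_prop
  have cK2 : Continuous fun q : Ed d × ℝ => poissonKDeriv₂ d (|q.2| + δ) (q.1 - z) := by
    unfold poissonKDeriv₂; fun_prop
  have cP : ∀ i, Continuous fun q : Ed d × ℝ => poissonKPartial i (|q.2| + δ) (q.1 - z) :=
    fun i => by unfold poissonKPartial; fun_prop
  have cP2 : ∀ i, Continuous fun q : Ed d × ℝ => poissonKPartial₂ i (|q.2| + δ) (q.1 - z) :=
    fun i => by unfold poissonKPartial₂; fun_prop
  have s1 := contDiff_fderiv_apply hζ
  have s2 := fun v => contDiff_fderiv_apply (s1 v) v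
  have c1 : ∀ v, HasCompactSupport fun q => fderiv ℝ ζ q v := fun v => hc.fderiv_apply ℝ v
  have c2 : ∀ v, HasCompactSupport fun q => fderiv ℝ (fun q => fderiv ℝ ζ q v) q v :=
    fun v => (c1 v).fderiv_apply ℝ v
  have iA : ∀ i : Fin d, Integrable fun q : Ed d × ℝ => poissonK d (|q.2| + δ) (q.1 - z) *
      fderiv ℝ (fun q => fderiv ℝ ζ q (EuclideanSpace.single i 1, 0)) q
        (EuclideanSpace.single i 1, 0) - poissonKPartial₂ i (|q.2| + δ) (q.1 - z) * ζ q :=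
    fun i => integrable_shift_sub cK (cP2 i) (s2 _).continuous hζ.continuous (c2 _) hc
  have iF : ∀ i : Fin d, Integrable fun q : Ed d × ℝ => poissonK d (|q.2| + δ) (q.1 - z) *
      fderiv ℝ ζ q (EuclideanSpace.single i 1, 0) -
        poissonKPartial i (|q.2| + δ) (q.1 - z) * ζ q :=
    fun i => integrable_shift_sub cK (cP i) (s1 _).continuous hζ.continuous (c1 _) hc
  have iB : Integrable fun q : Ed d × ℝ => poissonK d (|q.2| + δ) (q.1 - z) *
      fderiv ℝ (fun q => fderiv ℝ ζ q (0, 1)) q (0, 1) -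
        poissonKDeriv₂ d (|q.2| + δ) (q.1 - z) * ζ q :=
    integrable_shift_sub cK cK2 (s2 _).continuous hζ.continuous (c2 _) hc
  obtain ⟨R, hR⟩ : ∃ R, tsupport ζ ⊆ closedBall 0 R := hc.isCompact.isBounded.subset_closedBall 0
  have hout : ∀ x t, R < |t| → ζ (x, t) = 0 ∧ fderiv ℝ ζ (x, t) (0, 1) = 0 := fun x t ht => by
    have hn : (x, t) ∉ tsupport ζ := fun h => by
      have := mem_closedBall_zero_iff.1 (hR h)
      exact absurd ((norm_snd_le (x, t)).trans this) (by simpa using ht)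
    exact ⟨image_eq_zero_of_notMem_tsupport hn, by
      rw [fderiv_of_notMem_tsupport (𝕜 := ℝ) hn]; simp⟩
  have zA : ∀ i : Fin d, ∫ q : Ed d × ℝ, (poissonK d (|q.2| + δ) (q.1 - z) *
      fderiv ℝ (fun q => fderiv ℝ ζ q (EuclideanSpace.single i 1, 0)) q
        (EuclideanSpace.single i 1, 0) - poissonKPartial₂ i (|q.2| + δ) (q.1 - z) * ζ q) = 0 := by
    intro i
    have jA := iA i
    have jF := iF i
    rw [Measure.volume_eq_prod] at jA jF ⊢
    rw [integral_prod_symm _ jA]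
    refine integral_eq_zero_of_ae ?_
    filter_upwards [jA.prod_left_ae, jF.prod_left_ae] with t h1 h2
    refine integral_lineDeriv_eq_zero (e := EuclideanSpace.single i 1) (fun x => ?_) h2 h1
    have k1 := hasLineDerivAt_sub_right (hasLineDerivAt_poissonK (hpos t) (x - z) i)
    have k2 := hasLineDerivAt_sub_right (hasLineDerivAt_poissonKPartial (hpos t) (x - z) i)
    have l1 := hasLineDerivAt_slice hζ x (EuclideanSpace.single i 1) t
    have l2 := hasLineDerivAt_slice (s1 (EuclideanSpace.single i 1, 0)) x
      (EuclideanSpace.single i 1) t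
    refine ((HasDerivAt.fun_mul k1 l2).fun_sub (HasDerivAt.fun_mul k2 l1)).congr_deriv ?_
    simp only [zero_smul, add_zero]
    ring
  have zB : ∫ q : Ed d × ℝ, (poissonK d (|q.2| + δ) (q.1 - z) *
      fderiv ℝ (fun q => fderiv ℝ ζ q (0, 1)) q (0, 1) -
        poissonKDeriv₂ d (|q.2| + δ) (q.1 - z) * ζ q) =
      2 * ∫ x, poissonKDeriv d δ (x - z) * ζ (x, 0) := by
    have jB := iB
    rw [Measure.volume_eq_prod] at jB ⊢
    rw [integral_prod _ jB, ← integral_const_mul]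
    refine integral_congr_ae ?_
    filter_upwards [jB.prod_right_ae] with x h1
    exact integral_abs_green (h := fun t => poissonK d t (x - z))
      (h₁ := fun t => poissonKDeriv d t (x - z)) (h₂ := fun t => poissonKDeriv₂ d t (x - z)) hδ
      (fun s hs => hasDerivAt_poissonK hs _) (fun s hs => hasDerivAt_poissonKDeriv hs _)
      (fun t => hasDerivAt_slice hζ x t) (fun t => hasDerivAt_slice (s1 _) x t)
      (hout x) h1
  rw [← zB, ← add_zero (∫ q : Ed d × ℝ, (_ - _)), ← Finset.sum_eq_zero (s := Finset.univ)
    fun i _ => zA i, ← integral_finsetSum _ fun i _ => iA i,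
    ← integral_add iB (integrable_finsetSum _ fun i _ => iA i)]
  refine integral_congr_ae (Eventually.of_forall fun q => ?_)
  have hh := sum_poissonKPartial₂_add (hpos q.2) (q.1 - z)
  simp only [lapProd_eq (hζ.of_le two_le_infty), Finset.sum_sub_distrib, ← Finset.mul_sum,
    ← Finset.sum_mul]
  linear_combination ζ q * hh

section Fubini
variable {X : Type*} [MeasurableSpace X] {μ : Measure X} {Φ : Ed d → ℝ}
  {k : X → Ed d → ℝ} {g : X → ℝ} {C : ℝ}

lemma integrable_kernel_prod (hm : Measurable Φ)
    (hint : Integrable (fun y : Ed d => |Φ y| * (1 + ‖y‖) ^ (-(d : ℝ) - 1)))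
    (hk : Measurable (Function.uncurry k)) (hg : Integrable g μ)
    (hb : ∀ x, g x ≠ 0 → ∀ z, |k x z| ≤ C * (1 + ‖z‖) ^ (-(d : ℝ) - 1)) :
    Integrable (Function.uncurry fun x z => k x z * Φ z * g x) (μ.prod volume) := by
  refine (hg.norm.mul_prod (hint.const_mul C)).mono'
    ((hk.mul (hm.comp measurable_snd)).aestronglyMeasurable.mul hg.aestronglyMeasurable.comp_fst)
    (Eventually.of_forall fun p => ?_)
  simp only [Function.uncurry, norm_mul, norm_eq_abs]
  rcases eq_or_ne (g p.1) 0 with h0 | h0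
  · simp [h0]
  · calc |k p.1 p.2| * |Φ p.2| * |g p.1|
        ≤ (C * (1 + ‖p.2‖) ^ (-(d : ℝ) - 1)) * |Φ p.2| * |g p.1| := by
          gcongr
          exact hb _ h0 _
      _ = _ := by ring

lemma integrable_kernelIntegral_mul [SFinite μ] (hm : Measurable Φ)
    (hint : Integrable (fun y : Ed d => |Φ y| * (1 + ‖y‖) ^ (-(d : ℝ) - 1)))
    (hk : Measurable (Function.uncurry k)) (hg : Integrable g μ)
    (hb : ∀ x, g x ≠ 0 → ∀ z, |k x z| ≤ C * (1 + ‖z‖) ^ (-(d : ℝ) - 1)) :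
    Integrable (fun x => (∫ z, k x z * Φ z) * g x) μ := by
  simpa only [Function.uncurry, integral_mul_const] using
    (integrable_kernel_prod hm hint hk hg hb).integral_prod_left

lemma integral_kernelIntegral_mul [SFinite μ] (hm : Measurable Φ)
    (hint : Integrable (fun y : Ed d => |Φ y| * (1 + ‖y‖) ^ (-(d : ℝ) - 1)))
    (hk : Measurable (Function.uncurry k)) (hg : Integrable g μ)
    (hb : ∀ x, g x ≠ 0 → ∀ z, |k x z| ≤ C * (1 + ‖z‖) ^ (-(d : ℝ) - 1)) :
    ∫ x, (∫ z, k x z * Φ z) * g x ∂μ = ∫ z, (∫ x, k x z * g x ∂μ) * Φ z := by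
  simp only [← integral_mul_const]
  rw [integral_integral_swap (integrable_kernel_prod hm hint hk hg hb)]
  simp only [mul_right_comm]

end Fubini

lemma continuous_lapProd {ζ : Ed d × ℝ → ℝ} (hζ : ContDiff ℝ ∞ ζ) :
    Continuous (lapProd d ζ) := by
  have h := hζ.continuous_iteratedFDeriv (m := 2) (by exact_mod_cast two_le_infty)
  unfold lapProd
  fun_prop

lemma hasCompactSupport_lapProd {ζ : Ed d × ℝ → ℝ} (hc : HasCompactSupport ζ) :
    HasCompactSupport (lapProd d ζ) :=
  HasCompactSupport.intro hc.isCompact fun _ h => lapProd_eq_zero_of_notMem_tsupport h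

lemma integrable_lapProd {ζ : Ed d × ℝ → ℝ} (hζ : ContDiff ℝ ∞ ζ) (hc : HasCompactSupport ζ) :
    Integrable (lapProd d ζ) :=
  (continuous_lapProd hζ).integrable_of_hasCompactSupport (hasCompactSupport_lapProd hc)

lemma isCompact_zeroSlice {ζ : Ed d × ℝ → ℝ} (hc : HasCompactSupport ζ) :
    IsCompact {x : Ed d | (x, (0 : ℝ)) ∈ tsupport ζ} := by
  have h := (hc.isCompact.inter_right (isClosed_singleton.preimage continuous_snd :
    IsClosed (Prod.snd ⁻¹' {(0 : ℝ)} : Set (Ed d × ℝ)))).image continuous_fst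
  convert h using 1
  ext x
  constructor
  · exact fun hx => ⟨(x, 0), ⟨hx, rfl⟩, rfl⟩
  · rintro ⟨⟨y, t⟩, ⟨hy, rfl⟩, rfl⟩
    exact hy

lemma integrable_zeroSlice {ζ : Ed d × ℝ → ℝ} (hζ : Continuous ζ) (hc : HasCompactSupport ζ) :
    Integrable fun x : Ed d => ζ (x, 0) :=
  Continuous.integrable_of_hasCompactSupport (by fun_prop)
    (HasCompactSupport.intro (isCompact_zeroSlice hc)
      fun _ h => image_eq_zero_of_notMem_tsupport h)

section Weak
variable {Φ : Ed d → ℝ} {ζ : Ed d × ℝ → ℝ} {δ : ℝ}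

lemma measurable_poissonK_shift (d : ℕ) (δ : ℝ) : Measurable (Function.uncurry
    fun (q : Ed d × ℝ) (z : Ed d) => poissonK d (|q.2| + δ) (q.1 - z)) := by
  unfold poissonK Function.uncurry
  fun_prop

lemma measurable_poissonKDeriv_shift (d : ℕ) (δ : ℝ) : Measurable (Function.uncurry
    fun (x : Ed d) (z : Ed d) => poissonKDeriv d δ (x - z)) := by
  unfold poissonKDeriv Function.uncurry
  fun_prop

/-- The Poisson kernels over the support of a test function have a common weight bound. -/
lemma exists_kernel_bound_on_support (hd : 1 ≤ d) (hc : HasCompactSupport ζ) (hδ : 0 < δ) : ∃ C,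
    (∀ q : Ed d × ℝ, lapProd d ζ q ≠ 0 → ∀ z,
      |poissonK d (|q.2| + δ) (q.1 - z)| ≤ C * (1 + ‖z‖) ^ (-(d : ℝ) - 1)) ∧
    (∀ x : Ed d, ζ (x, 0) ≠ 0 → ∀ z,
      |poissonKDeriv d δ (x - z)| ≤ C * (1 + ‖z‖) ^ (-(d : ℝ) - 1)) := by
  obtain ⟨R, hR⟩ : ∃ R, tsupport ζ ⊆ closedBall 0 R := hc.isCompact.isBounded.subset_closedBall 0
  obtain ⟨C, -, hC⟩ := exists_kernel_bound hd hδ (|R| + δ) R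
  refine ⟨C, fun q hq z => ?_, fun x hx z => ?_⟩
  · have hq' : q ∈ tsupport ζ := by_contra fun h => hq (lapProd_eq_zero_of_notMem_tsupport h)
    have h := mem_closedBall_zero_iff.1 (hR hq')
    have h2 : |q.2| ≤ R := (norm_snd_le q).trans h
    exact (hC _ ⟨by linarith [abs_nonneg q.2], by linarith [le_abs_self R]⟩ q.1
      ((norm_fst_le q).trans h) z).1
  · have h := mem_closedBall_zero_iff.1 (hR (subset_tsupport ζ hx))
    exact (hC _ ⟨le_rfl, by linarith [abs_nonneg R]⟩ x ((norm_fst_le (x, (0 : ℝ))).trans h) z).2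

lemma integral_poissonIntegral_mul_lapProd (hd : 1 ≤ d) (hm : Measurable Φ)
    (hint : Integrable (fun y : Ed d => |Φ y| * (1 + ‖y‖) ^ (-(d : ℝ) - 1)))
    (hζ : ContDiff ℝ ∞ ζ) (hc : HasCompactSupport ζ) (hδ : 0 < δ) :
    ∫ q : Ed d × ℝ, (∫ z, poissonK d (|q.2| + δ) (q.1 - z) * Φ z) * lapProd d ζ q =
      2 * ∫ x, (∫ z, poissonKDeriv d δ (x - z) * Φ z) * ζ (x, 0) := by
  obtain ⟨C, h1, h2⟩ := exists_kernel_bound_on_support hd hc hδ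
  rw [integral_kernelIntegral_mul hm hint (measurable_poissonK_shift d δ)
    (integrable_lapProd hζ hc) h1,
    integral_kernelIntegral_mul hm hint (measurable_poissonKDeriv_shift d δ)
    (integrable_zeroSlice hζ.continuous hc) h2, ← integral_const_mul]
  simp only [integral_poissonK_mul_lapProd hζ hc hδ, mul_assoc]

variable {E : Set (Ed d)}

lemma isOpen_extensionDomain (hE : IsOpen E) : IsOpen {p : Ed d × ℝ | p.2 ≠ 0 ∨ p.1 ∈ E} :=
  (isOpen_ne_fun continuous_snd continuous_const).union (hE.preimage continuous_fst)

/-- The boundary term of Green's identity vanishes in the limit. -/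
lemma tendsto_boundaryTerm (hd : 1 ≤ d) (hE : IsOpen E) (hm : Measurable Φ)
    (hint : Integrable (fun y : Ed d => |Φ y| * (1 + ‖y‖) ^ (-(d : ℝ) - 1)))
    (hC2 : ContDiffOn ℝ 2 Φ E) (hharm : ∀ x ∈ E, fracLapAt d 1 Φ x 0)
    (hζ : Continuous ζ) (hc : HasCompactSupport ζ)
    (hD : tsupport ζ ⊆ {p : Ed d × ℝ | p.2 ≠ 0 ∨ p.1 ∈ E}) :
    Tendsto (fun δ => 2 * ∫ x, (∫ z, poissonKDeriv d δ (x - z) * Φ z) * ζ (x, 0)) (𝓝[>] 0)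
      (𝓝 0) := by
  have hLE : {x : Ed d | (x, (0 : ℝ)) ∈ tsupport ζ} ⊆ E := fun x hx =>
    (hD hx).resolve_left (by simp)
  obtain ⟨C, hC⟩ := exists_bound_on_compact hd hE hm hint hC2 (isCompact_zeroSlice hc) hLE
  suffices h : Tendsto (fun δ => ∫ x, (∫ z, poissonKDeriv d δ (x - z) * Φ z) * ζ (x, 0)) (𝓝[>] 0)
      (𝓝 (∫ _ : Ed d, (0 : ℝ))) by simpa using h.const_mul 2
  have hδ : ∀ᶠ δ : ℝ in 𝓝[>] 0, 0 < δ := eventually_mem_nhdsWithin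
  refine tendsto_integral_filter_of_dominated_convergence
    (fun x => poissonConst d * d * C * ‖ζ (x, 0)‖) ?_ ?_
    ((integrable_zeroSlice hζ hc).norm.const_mul _) (Eventually.of_forall fun x => ?_)
  · filter_upwards [hδ] with δ hδ
    obtain ⟨K, -, hK⟩ := exists_kernel_bound_on_support hd hc hδ
    exact (integrable_kernelIntegral_mul hm hint (measurable_poissonKDeriv_shift d δ)
      (integrable_zeroSlice hζ hc) hK).aestronglyMeasurable
  · filter_upwards [hδ] with δ hδ
    refine Eventually.of_forall fun x => ?_
    by_cases hx : (x, (0 : ℝ)) ∈ tsupport ζ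
    · have := poissonConst_pos d
      rw [norm_mul]
      gcongr
      refine (abs_poissonDerivIntegral_le hd hm hint hδ (hC x hx).1).trans ?_
      gcongr
      exact (hC x hx).2
    · simp [image_eq_zero_of_notMem_tsupport hx]
  · by_cases hx : (x, (0 : ℝ)) ∈ tsupport ζ
    · simpa using (tendsto_poissonDerivIntegral hd hm hint (hC x hx).1
        (hharm x (hLE hx))).mul_const (ζ (x, 0))
    · simp [image_eq_zero_of_notMem_tsupport hx]

/-- The Poisson extension is weakly harmonic. -/
lemma weaklyHarmonic_poissonExtension (hd : 1 ≤ d) (hE : IsOpen E) (hm : Measurable Φ)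
    (hint : Integrable (fun y : Ed d => |Φ y| * (1 + ‖y‖) ^ (-(d : ℝ) - 1)))
    (hC2 : ContDiffOn ℝ 2 Φ E) (hharm : ∀ x ∈ E, fracLapAt d 1 Φ x 0) {U : Ed d × ℝ → ℝ}
    (hU : ∀ p : Ed d × ℝ,
      U p = if p.2 = 0 then Φ p.1 else ∫ y : Ed d, poissonK d |p.2| (p.1 - y) * Φ y)
    (hζ : ContDiff ℝ ∞ ζ) (hc : HasCompactSupport ζ)
    (hD : tsupport ζ ⊆ {p : Ed d × ℝ | p.2 ≠ 0 ∨ p.1 ∈ E}) :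
    ∫ q, U q * lapProd d ζ q = 0 := by
  have hcont := continuousOn_poissonExtension hd hE hm hint hC2 hU
  have hpos : ∀ {δ : ℝ}, 0 < δ → ∀ q : Ed d × ℝ,
      U (q.1, |q.2| + δ) = ∫ z, poissonK d (|q.2| + δ) (q.1 - z) * Φ z := fun hδ q => by
    have h : 0 < |q.2| + _ := add_pos_of_nonneg_of_pos (abs_nonneg q.2) hδ
    rw [hU, if_neg h.ne', abs_of_pos h]
  have hshift : Continuous fun r : (Ed d × ℝ) × ℝ => ((r.1.1, |r.1.2| + r.2) : Ed d × ℝ) := by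
    fun_prop
  have hmaps : ∀ q ∈ tsupport ζ, ∀ δ : ℝ, 0 ≤ δ →
      ((q.1, |q.2| + δ) : Ed d × ℝ) ∈ {p : Ed d × ℝ | p.2 ≠ 0 ∨ p.1 ∈ E} := fun q hq δ hδ => by
    refine (hD hq).imp (fun h => ?_) id
    have := abs_pos.2 h
    exact (by positivity : |q.2| + δ ≠ 0)
  obtain ⟨B, hB⟩ := ((hc.isCompact.prod (isCompact_Icc (a := (0 : ℝ)) (b := 1))).image
    hshift).exists_bound_of_continuousOn (hcont.mono (by
      rintro _ ⟨⟨q, δ⟩, ⟨hq, hδ⟩, rfl⟩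
      exact hmaps q hq δ hδ.1))
  have hlim : Tendsto (fun δ => ∫ q : Ed d × ℝ, U (q.1, |q.2| + δ) * lapProd d ζ q) (𝓝[>] 0)
      (𝓝 (∫ q, U q * lapProd d ζ q)) := by
    have hδ : ∀ᶠ δ : ℝ in 𝓝[>] 0, δ ∈ Ioo (0 : ℝ) 1 := Ioo_mem_nhdsGT one_pos
    refine tendsto_integral_filter_of_dominated_convergence (fun q => B * ‖lapProd d ζ q‖) ?_ ?_
      ((integrable_lapProd hζ hc).norm.const_mul _) (Eventually.of_forall fun q => ?_)
    · filter_upwards [hδ] with δ hδ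
      obtain ⟨K, hK, -⟩ := exists_kernel_bound_on_support hd hc hδ.1
      simp only [hpos hδ.1]
      exact (integrable_kernelIntegral_mul hm hint (measurable_poissonK_shift d δ)
        (integrable_lapProd hζ hc) hK).aestronglyMeasurable
    · filter_upwards [hδ] with δ hδ
      refine Eventually.of_forall fun q => ?_
      by_cases hq : q ∈ tsupport ζ
      · rw [norm_mul]
        gcongr
        exact hB _ ⟨(q, δ), ⟨hq, hδ.1.le, hδ.2.le⟩, rfl⟩
      · simp [lapProd_eq_zero_of_notMem_tsupport hq]
    · by_cases hq : q ∈ tsupport ζ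
      · refine Tendsto.mul_const _ ?_
        have h0 : U (q.1, |q.2|) = U q := by simp [hU]
        have h1 : ContinuousAt U (q.1, |q.2|) := hcont.continuousAt
          ((isOpen_extensionDomain hE).mem_nhds (by simpa using hmaps q hq 0 le_rfl))
        rw [← h0]
        refine h1.tendsto.comp (Tendsto.mono_left ?_ nhdsWithin_le_nhds)
        have h2 : Continuous fun δ : ℝ => ((q.1, |q.2| + δ) : Ed d × ℝ) := by fun_prop
        simpa using h2.tendsto 0
      · simp [lapProd_eq_zero_of_notMem_tsupport hq]
  refine tendsto_nhds_unique hlim ((tendsto_boundaryTerm hd hE hm hint hC2 hharm hζ.continuous hc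
    hD).congr' ?_)
  filter_upwards [self_mem_nhdsWithin] with δ hδ
  simp only [hpos hδ, integral_poissonIntegral_mul_lapProd hd hm hint hζ hc hδ]

end Weak

end PoissonExtension

/-- the Poisson extension of a function harmonic for `Δ^{1/2}` on `E ⊆ ℝ^d`
is harmonic for the classical Laplacian on `D = {(x,t) : t ≠ 0 or x ∈ E} ⊆ ℝ^d × ℝ`. -/
theorem poisson_extension_harmonic (d : ℕ) (hd : 1 ≤ d)
    (E : Set (Ed d)) (hE : IsOpen E)
    (Φ : Ed d → ℝ) (hmeas : Measurable Φ)
    (hint : Integrable (fun y : Ed d => |Φ y| * (1 + ‖y‖) ^ (-(d : ℝ) - 1)))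
    (hC2 : ContDiffOn ℝ 2 Φ E)
    (hharm : ∀ x ∈ E, fracLapAt d 1 Φ x 0)
    (U : Ed d × ℝ → ℝ)
    (hU : ∀ p : Ed d × ℝ,
      U p = if p.2 = 0 then Φ p.1 else ∫ y : Ed d, poissonK d |p.2| (p.1 - y) * Φ y) :
    ContDiffOn ℝ 2 U {p : Ed d × ℝ | p.2 ≠ 0 ∨ p.1 ∈ E} ∧
      ∀ p ∈ {p : Ed d × ℝ | p.2 ≠ 0 ∨ p.1 ∈ E}, lapProd d U p = 0 := by
  exact PoissonExtension.harmonic_of_weaklyHarmonic (PoissonExtension.isOpen_extensionDomain hE)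
    (PoissonExtension.continuousOn_poissonExtension hd hE hmeas hint hC2 hU)
    fun _ hζ hc hD => PoissonExtension.weaklyHarmonic_poissonExtension hd hE hmeas hint hC2 hharm hU
      hζ hc hD
end
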